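/- Let A be an affine hyperplane arrangement in ℝ^d and for j ∈ {0,…,d} let χ_{A,j}(t) = Σ_{L ∈ L_j(A)} χ_{A^L}(t) = Σ_{k=0}^j (−1)^{j−k} a_{kj} t^k be the j-th level characteristic polynomial. Then for every k ∈ {0,…,j} and every x ∈ ℝ^d outside a finite union of affine hyperplanes, Σ_{P ∈ R_j(A)} Σ_{F ∈ F_k(P)} 1_{F + N_F(P)}(x) = a_{kj}, where R_j(A) is the set of all j-dimensional faces of all closed chambers of A. -/

import Mathlib

open scoped RealInnerProductSpace Pointwise Classical
open Set

noncomputable section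

abbrev E (d : ℕ) : Type := EuclideanSpace ℝ (Fin d)

variable {d : ℕ}

/-- Positive hull: all finite nonnegative combinations of elements of `A`. -/
def posHull (A : Set (E d)) : Set (E d) :=
  {x | ∃ (n : ℕ) (c : Fin n → ℝ) (v : Fin n → E d),
    (∀ i, 0 ≤ c i) ∧ (∀ i, v i ∈ A) ∧ x = ∑ i, c i • v i}

/-- Dual (polar) cone. -/
def polarCone (C : Set (E d)) : Set (E d) := {z | ∀ y ∈ C, ⟪z, y⟫ ≤ 0}

/-- A polyhedral cone: finite intersection of linear closed half-spaces. -/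
def IsPolyCone (C : Set (E d)) : Prop :=
  ∃ (m : ℕ) (y : Fin m → E d), C = {z | ∀ i, ⟪z, y i⟫ ≤ 0}

/-- A polyhedral set: finite intersection of closed half-spaces. -/
def IsPolyhedron (P : Set (E d)) : Prop :=
  ∃ (m : ℕ) (y : Fin m → E d) (c : Fin m → ℝ), P = {z | ∀ i, ⟪z, y i⟫ ≤ c i}

/-- Faces of `P`: `P` itself, or intersections with supporting hyperplanes. -/
def IsFaceOf (P F : Set (E d)) : Prop :=
  F = P ∨ ∃ (y : E d) (c : ℝ), (∀ z ∈ P, ⟪y, z⟫ ≤ c) ∧ F = {z | z ∈ P ∧ ⟪y, z⟫ = c}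

/-- Dimension of a set: dimension of its affine hull. -/
def sdim (F : Set (E d)) : ℕ := Module.finrank ℝ (affineSpan ℝ F).direction

/-- The `k`-dimensional (nonempty) faces of `P`. -/
def facesOfDim (P : Set (E d)) (k : ℕ) : Set (Set (E d)) :=
  {F | IsFaceOf P F ∧ F.Nonempty ∧ sdim F = k}

/-- Tangent cone of `P` at a point `f₀`. -/
def tangentConeOf (P : Set (E d)) (f₀ : E d) : Set (E d) :=
  {u | ∃ δ : ℝ, 0 < δ ∧ f₀ + δ • u ∈ P}

/-- Normal cone of `P` at its face `F`: polar of the tangent cone at any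
relative interior point of `F`. -/
def normalCone (P F : Set (E d)) : Set (E d) :=
  {z | ∀ f₀ ∈ intrinsicInterior ℝ F, ∀ u ∈ tangentConeOf P f₀, ⟪z, u⟫ ≤ 0}

/-- `y` is a nearest point of `P` to `x`. -/
def IsNearestPt (P : Set (E d)) (x y : E d) : Prop :=
  y ∈ P ∧ ∀ z ∈ P, dist x y ≤ dist x z

/-- `dim(x,P) = k`: the metric projection of `x` onto `P` lies in the relative
interior of a `k`-dimensional face of `P`. -/
def projDimEq (P : Set (E d)) (x : E d) (k : ℕ) : Prop :=
  ∃ y F, IsNearestPt P x y ∧ IsFaceOf P F ∧ y ∈ intrinsicInterior ℝ F ∧ sdim F = k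

def IsHyperplane (H : Set (E d)) : Prop :=
  ∃ (y : E d) (c : ℝ), y ≠ 0 ∧ H = {z | ⟪y, z⟫ = c}

def IsLinearHyperplane (H : Set (E d)) : Prop :=
  ∃ y : E d, y ≠ 0 ∧ H = {z | ⟪y, z⟫ = 0}

/-- Closed chambers of the complement of the set `S`. -/
def IsChamberOfUnion (S P : Set (E d)) : Prop :=
  ∃ x : E d, x ∉ S ∧ P = closure (connectedComponentIn Sᶜ x)

/-- Closed chambers of the hyperplane arrangement `A`. -/
def IsChamber (A : Finset (Set (E d))) (P : Set (E d)) : Prop :=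
  IsChamberOfUnion (⋃ H ∈ A, H) P

/-- Intersection of a finite subcollection of hyperplanes (`⊤` for `∅`). -/
def interSet (B : Finset (Set (E d))) : Set (E d) := ⋂ H ∈ B, H

/-- The unsigned coefficient `a_k` of the characteristic polynomial:
`χ_A(t) = Σ_k (-1)^(d-k) a_k t^k` via Whitney's formula. -/
def charCoeff (A : Finset (Set (E d))) (k : ℕ) : ℤ :=
  (-1 : ℤ) ^ (d - k) *
    ∑ B ∈ A.powerset,
      if (interSet B).Nonempty ∧ sdim (interSet B) = k then (-1 : ℤ) ^ B.card else 0

/-- The `j`-dimensional members of the intersection lattice of `A`. -/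
def levels {d : ℕ} (A : Finset (Set (E d))) (j : ℕ) : Finset (Set (E d)) :=
  (A.powerset.image fun B => interSet B).filter fun L => L.Nonempty ∧ sdim L = j

/-- The restriction `A^L` of the arrangement `A` to a subspace `L`. -/
def restrict {d : ℕ} (A : Finset (Set (E d))) (L : Set (E d)) : Finset (Set (E d)) :=
  (A.image fun H => H ∩ L).filter fun M => M.Nonempty ∧ M ≠ L

/-- Unsigned coefficient `a_{k,L}` of the characteristic polynomial of an
arrangement inside the ambient `j`-dimensional space `L`
(Whitney's formula, with the empty intersection equal to `L`). -/
def charCoeffIn {d : ℕ} (L : Set (E d)) (A : Finset (Set (E d))) (j k : ℕ) : ℤ :=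
  (-1 : ℤ) ^ (j - k) *
    ∑ B ∈ A.powerset,
      if (interSet B ∩ L).Nonempty ∧ sdim (interSet B ∩ L) = k then (-1 : ℤ) ^ B.card
      else 0

/-- Unsigned coefficient `a_{kj}` of the `j`-th level characteristic
polynomial `χ_{A,j}(t) = Σ_{L ∈ L_j(A)} χ_{A^L}(t)`. -/
def levelCharCoeff {d : ℕ} (A : Finset (Set (E d))) (j k : ℕ) : ℤ :=
  ∑ L ∈ levels A j, charCoeffIn L (restrict A L) j k

/-- Value of the affine functional encoded by `h` at `z`. -/
def fv (h : E d × ℝ) (z : E d) : ℝ := ⟪h.1, z⟫ - h.2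

lemma fv_line (h : E d × ℝ) (y w : E d) (t : ℝ) :
    fv h (y + t • (w - y)) = fv h y + t * (fv h w - fv h y) := by
  simp only [fv, inner_add_right, inner_smul_right, inner_sub_right]; ring

lemma fv_cont (h : E d × ℝ) : Continuous (fv h) := by
  unfold fv; fun_prop

lemma small {ι : Type*} (s : Finset ι) (φ : ι → E d × ℝ) (y w : E d) :
    ∃ t : ℝ, 0 < t ∧ t < 1 ∧ ∀ i ∈ s, fv (φ i) y ≠ 0 →
      0 < fv (φ i) y * fv (φ i) (y + t • (w - y)) ∧
      0 < fv (φ i) y * fv (φ i) (y + (-t) • (w - y)) := by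
  have h1 : ∀ i ∈ s, ∀ᶠ t : ℝ in nhds 0, fv (φ i) y ≠ 0 →
      0 < fv (φ i) y * fv (φ i) (y + t • (w - y)) ∧
      0 < fv (φ i) y * fv (φ i) (y + (-t) • (w - y)) := by
    intro i _
    by_cases h0 : fv (φ i) y = 0
    · simp [h0]
    have hp : 0 < fv (φ i) y * fv (φ i) y := mul_self_pos.2 h0
    have c1 : Continuous fun t : ℝ => fv (φ i) y * fv (φ i) (y + t • (w - y)) :=
      continuous_const.mul ((fv_cont _).comp (by fun_prop))
    have c2 : Continuous fun t : ℝ => fv (φ i) y * fv (φ i) (y + (-t) • (w - y)) :=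
      continuous_const.mul ((fv_cont _).comp (by fun_prop))
    have e1 := c1.continuousAt (x := (0:ℝ)) |>.eventually (lt_mem_nhds (a := (0:ℝ)) (by simpa using hp))
    have e2 := c2.continuousAt (x := (0:ℝ)) |>.eventually (lt_mem_nhds (a := (0:ℝ)) (by simpa using hp))
    filter_upwards [e1, e2] with t h1 h2 _ using ⟨h1, h2⟩
  have h2 : ∀ᶠ t : ℝ in nhds 0, ∀ i ∈ s, fv (φ i) y ≠ 0 →
      0 < fv (φ i) y * fv (φ i) (y + t • (w - y)) ∧
      0 < fv (φ i) y * fv (φ i) (y + (-t) • (w - y)) :=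
    (Filter.eventually_all_finset s).2 h1
  have h3 : ∀ᶠ t : ℝ in nhdsWithin 0 (Ioi 0), t < 1 :=
    (eventually_lt_nhds (by norm_num)).filter_mono nhdsWithin_le_nhds
  obtain ⟨t, ht⟩ := ((h2.filter_mono nhdsWithin_le_nhds).and
    (h3.and self_mem_nhdsWithin)).exists (f := nhdsWithin (0:ℝ) (Ioi 0))
  exact ⟨t, ht.2.2, ht.2.1, ht.1⟩

/-- `y` is the metric projection of `x` to the convex set `K`. -/
def IsProj (K : Set (E d)) (x y : E d) : Prop := y ∈ K ∧ ∀ z ∈ K, ⟪x - y, z - y⟫ ≤ 0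

lemma isProj_unique {K : Set (E d)} {x y y' : E d} (h : IsProj K x y) (h' : IsProj K x y') :
    y = y' := by
  have h1 := h.2 _ h'.1
  have h2 := h'.2 _ h.1
  have h3 : ⟪y' - y, y' - y⟫ ≤ 0 := by
    have : ⟪y' - y, y' - y⟫ = ⟪x - y, y' - y⟫ + ⟪x - y', y - y'⟫ := by
      rw [show y - y' = -(y' - y) by abel, inner_neg_right, ← sub_eq_add_neg, ← inner_sub_left]
      congr 1; abel
    linarith
  have h4 : y' - y = 0 := by
    rw [← inner_self_eq_zero (𝕜 := ℝ)]
    exact le_antisymm h3 real_inner_self_nonneg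
  exact (sub_eq_zero.1 h4).symm

lemma isProj_exists {K : Set (E d)} (hne : K.Nonempty) (hc : IsClosed K) (hK : Convex ℝ K)
    (x : E d) : ∃ y, IsProj K x y := by
  obtain ⟨y, hy, h⟩ := exists_norm_eq_iInf_of_complete_convex hne hc.isComplete hK x
  exact ⟨y, hy, (norm_eq_iInf_iff_real_inner_le_zero hK hy).1 h⟩

/-- The zero set of an affine functional. -/
def Zs (h : E d × ℝ) : AffineSubspace ℝ (E d) where
  carrier := {z | fv h z = 0}
  smul_vsub_vadd_mem' := by
    intro c p1 p2 p3 h1 h2 h3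
    simp only [fv, Set.mem_ofPred_eq, vsub_eq_sub, vadd_eq_add, inner_add_right, inner_smul_right,
      inner_sub_right] at *
    linear_combination c * h1 - c * h2 + h3

@[simp] lemma mem_Zs {h : E d × ℝ} {z : E d} : z ∈ Zs h ↔ fv h z = 0 := Iff.rfl

lemma sdim_coe (L : AffineSubspace ℝ (E d)) : sdim (L : Set (E d)) = Module.finrank ℝ L.direction := by
  rw [sdim, AffineSubspace.affineSpan_coe]

section induct
variable {ι : Type*}

def flatB (L : AffineSubspace ℝ (E d)) (φ : ι → E d × ℝ) (B : Finset ι) : Set (E d) :=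
  {z | z ∈ L ∧ ∀ i ∈ B, fv (φ i) z = 0}

def Gen (L : AffineSubspace ℝ (E d)) (φ : ι → E d × ℝ) (s : Finset ι) (x : E d) : Prop :=
  ∀ B ⊆ s, ∀ a ∈ s, ∀ y ∈ flatB L φ B, (∀ w ∈ flatB L φ B, ⟪x - y, w - y⟫ = 0) →
    fv (φ a) y = 0 → ∀ w ∈ flatB L φ B, fv (φ a) w = 0

def Reg (L : AffineSubspace ℝ (E d)) (φ : ι → E d × ℝ) (s T : Finset ι) : Set (E d) :=
  {z | z ∈ L ∧ ∀ i ∈ s, (i ∈ T → 0 < fv (φ i) z) ∧ (i ∉ T → fv (φ i) z < 0)}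

def Clo (L : AffineSubspace ℝ (E d)) (φ : ι → E d × ℝ) (s T : Finset ι) : Set (E d) :=
  {z | z ∈ L ∧ ∀ i ∈ s, (i ∈ T → 0 ≤ fv (φ i) z) ∧ (i ∉ T → fv (φ i) z ≤ 0)}

def zer (φ : ι → E d × ℝ) (s : Finset ι) (y : E d) : Finset ι := s.filter fun i => fv (φ i) y = 0

def Good (k : ℕ) (x : E d) (L : AffineSubspace ℝ (E d)) (φ : ι → E d × ℝ) (s T : Finset ι) : Prop :=
  (Reg L φ s T).Nonempty ∧ ∃ y, IsProj (Clo L φ s T) x y ∧ sdim (flatB L φ (zer φ s y)) = k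

lemma Gen.mono {L : AffineSubspace ℝ (E d)} {φ : ι → E d × ℝ} {s s' : Finset ι} {x : E d}
    (h : Gen L φ s x) (hs : s' ⊆ s) : Gen L φ s' x :=
  fun B hB a ha => h B (hB.trans hs) a (hs ha)

lemma flatB_inf (L : AffineSubspace ℝ (E d)) (φ : ι → E d × ℝ) (a : ι) (B : Finset ι) :
    flatB (L ⊓ Zs (φ a)) φ B = flatB L φ (insert a B) := by
  ext z; simp [flatB, AffineSubspace.mem_inf_iff, and_assoc]

lemma Gen.restr {L : AffineSubspace ℝ (E d)} {φ : ι → E d × ℝ} {s : Finset ι} {x : E d} {a : ι}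
    (h : Gen L φ (insert a s) x) : Gen (L ⊓ Zs (φ a)) φ s x := by
  intro B hB b hb
  rw [flatB_inf]
  exact h _ (Finset.insert_subset_insert _ hB) b (Finset.mem_insert_of_mem hb)

lemma line_mem {L : AffineSubspace ℝ (E d)} {y w : E d} (hy : y ∈ L) (hw : w ∈ L) (t : ℝ) :
    y + t • (w - y) ∈ L := by
  have := AffineMap.lineMap_mem (Q := L) t hy hw
  rwa [AffineMap.lineMap_apply, vsub_eq_sub, vadd_eq_add, add_comm] at this

lemma Reg_sub_Clo {L : AffineSubspace ℝ (E d)} {φ : ι → E d × ℝ} {s T : Finset ι} :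
    Reg L φ s T ⊆ Clo L φ s T :=
  fun _ hz => ⟨hz.1, fun i hi => ⟨fun h => ((hz.2 i hi).1 h).le, fun h => ((hz.2 i hi).2 h).le⟩⟩

lemma Clo_convex (L : AffineSubspace ℝ (E d)) (φ : ι → E d × ℝ) (s T : Finset ι) :
    Convex ℝ (Clo L φ s T) := by
  rw [convex_iff_add_mem]
  intro y hy w hw a b ha hb hab
  have e : a • y + b • w = y + b • (w - y) := by
    rw [show a = 1 - b by linarith]; module
  rw [e]
  refine ⟨line_mem hy.1 hw.1 _, fun i hi => ?_⟩
  have := hy.2 i hi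
  have h2 := hw.2 i hi
  rw [fv_line, show fv (φ i) y + b * (fv (φ i) w - fv (φ i) y) = a * fv (φ i) y + b * fv (φ i) w by
    rw [show a = 1 - b by linarith]; ring]
  refine ⟨fun h => ?_, fun h => ?_⟩
  · have := this.1 h; have := h2.1 h; positivity
  · have := mul_nonpos_of_nonneg_of_nonpos ha (this.2 h)
    have := mul_nonpos_of_nonneg_of_nonpos hb (h2.2 h)
    linarith

lemma Clo_closed (L : AffineSubspace ℝ (E d)) (φ : ι → E d × ℝ) (s T : Finset ι) :
    IsClosed (Clo L φ s T) := by
  have : Clo L φ s T = (L : Set (E d)) ∩ ⋂ i ∈ s,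
      ({z | i ∈ T → 0 ≤ fv (φ i) z} ∩ {z | i ∉ T → fv (φ i) z ≤ 0}) := by
    ext z; simp [Clo]
  rw [this]
  refine L.closed_of_finiteDimensional.inter (isClosed_biInter fun i _ => ?_)
  by_cases h : i ∈ T
  · simpa [h] using isClosed_le continuous_const (fv_cont _)
  · simpa [h] using isClosed_le (fv_cont _) continuous_const

/-- Moving slightly inside the flat of `y` stays in the closed region. -/
lemma Clo_move {L : AffineSubspace ℝ (E d)} {φ : ι → E d × ℝ} {s T : Finset ι} {y w : E d}
    (hy : y ∈ Clo L φ s T) (hw : w ∈ flatB L φ (zer φ s y)) :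
    ∃ t : ℝ, 0 < t ∧ t < 1 ∧ y + t • (w - y) ∈ Clo L φ s T ∧ y + (-t) • (w - y) ∈ Clo L φ s T := by
  obtain ⟨t, ht, ht1, h⟩ := small s φ y w
  refine ⟨t, ht, ht1, ⟨line_mem hy.1 hw.1 _, fun i hi => ?_⟩, ⟨line_mem hy.1 hw.1 _, fun i hi => ?_⟩⟩
  all_goals
    by_cases h0 : fv (φ i) y = 0
    · have : fv (φ i) w = 0 := hw.2 i (by simp [zer, hi, h0])
      simp only [fv_line, h0, this]; simp
    · have h1 := h i hi h0
      have h2 := hy.2 i hi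
      refine ⟨fun hT => ?_, fun hT => ?_⟩
      · have h3 : 0 < fv (φ i) y := lt_of_le_of_ne (h2.1 hT) (Ne.symm h0)
        first
        | exact (pos_of_mul_pos_right h1.1 h3.le).le
        | exact (pos_of_mul_pos_right h1.2 h3.le).le
      · have h3 : fv (φ i) y < 0 := lt_of_le_of_ne (h2.2 hT) h0
        first
        | exact (neg_of_mul_pos_right h1.1 h3.le).le
        | exact (neg_of_mul_pos_right h1.2 h3.le).le

lemma proj_perp {L : AffineSubspace ℝ (E d)} {φ : ι → E d × ℝ} {s T : Finset ι} {x y : E d}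
    (hy : IsProj (Clo L φ s T) x y) : ∀ w ∈ flatB L φ (zer φ s y), ⟪x - y, w - y⟫ = 0 := by
  intro w hw
  obtain ⟨t, ht, -, h1, h2⟩ := Clo_move hy.1 hw
  have h1 := hy.2 _ h1
  have h2 := hy.2 _ h2
  simp only [add_sub_cancel_left, inner_smul_right] at h1 h2
  nlinarith

lemma self_mem_flat {L : AffineSubspace ℝ (E d)} {φ : ι → E d × ℝ} {s : Finset ι} {y : E d}
    (hy : y ∈ L) : y ∈ flatB L φ (zer φ s y) :=
  ⟨hy, fun i hi => (Finset.mem_filter.1 hi).2⟩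

lemma flat_insert_eq {L : AffineSubspace ℝ (E d)} {φ : ι → E d × ℝ} {s T : Finset ι} {x y : E d}
    {a : ι} (hG : Gen L φ (insert a s) x) (hy : IsProj (Clo L φ s T) x y) :
    flatB L φ (zer φ (insert a s) y) = flatB L φ (zer φ s y) := by
  have key := hG (zer φ s y) ((Finset.filter_subset _ _).trans (Finset.subset_insert _ _)) a
    (Finset.mem_insert_self _ _) y (self_mem_flat hy.1.1) (proj_perp hy)
  ext z
  constructor
  · rintro ⟨h1, h2⟩
    exact ⟨h1, fun i hi => h2 i (by simp [zer] at hi ⊢; tauto)⟩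
  · intro hz
    refine ⟨hz.1, fun i hi => ?_⟩
    simp only [zer, Finset.mem_filter, Finset.mem_insert] at hi
    rcases hi with ⟨rfl | hi, h0⟩
    · exact key h0 z hz
    · exact hz.2 i (by simp [zer, hi, h0])
end induct

section induct2

def Qp (k : ℕ) (x : E d) (R K : Set (E d)) (D : E d → ℕ) : Prop :=
  R.Nonempty ∧ ∃ y, IsProj K x y ∧ D y = k

lemma Qp_congr {k : ℕ} {x : E d} {R R' K K' : Set (E d)} {D D' : E d → ℕ} (hR : R = R')
    (hK : K = K') (hD : ∀ y, IsProj K x y → D y = D' y) :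
    Qp k x R K D ↔ Qp k x R' K' D' := by
  subst hR hK
  refine and_congr_right fun _ => exists_congr fun y => and_congr_right fun hy => ?_
  rw [hD y hy]

lemma Qp_empty {k : ℕ} {x : E d} {R K : Set (E d)} {D : E d → ℕ} (h : R = ∅) :
    ¬ Qp k x R K D := by
  rintro ⟨h1, -⟩; simp [h] at h1

lemma Qp_of_proj {k : ℕ} {x y : E d} {R K : Set (E d)} {D : E d → ℕ} (hR : R.Nonempty)
    (hy : IsProj K x y) : Qp k x R K D ↔ D y = k := by
  constructor
  · rintro ⟨-, z, hz, h⟩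
    rwa [isProj_unique hy hz]
  · exact fun h => ⟨hR, y, hy, h⟩

lemma proj_half {K : Set (E d)} (hK : Convex ℝ K) {f : E d × ℝ} {x y : E d}
    (hy : IsProj K x y) (h0 : 0 ≤ fv f y) :
    IsProj (K ∩ {z | 0 ≤ fv f z}) x y ∧
    ∀ y', IsProj (K ∩ {z | fv f z ≤ 0}) x y' → fv f y' = 0 ∧ IsProj (K ∩ {z | fv f z = 0}) x y' := by
  refine ⟨⟨⟨hy.1, h0⟩, fun z hz => hy.2 z hz.1⟩, fun y' hy' => ?_⟩
  have key : fv f y' = 0 := by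
    by_contra hne
    have hlt : fv f y' < 0 := lt_of_le_of_ne hy'.1.2 hne
    have hpos : 0 < fv f y - fv f y' := by linarith
    set t := (- fv f y') / (fv f y - fv f y') with ht
    have ht0 : 0 < t := div_pos (by linarith) hpos
    have ht1 : t ≤ 1 := by rw [ht, div_le_one hpos]; linarith
    have hm : y' + t • (y - y') ∈ K ∩ {z | fv f z ≤ 0} := by
      refine ⟨?_, ?_⟩
      · exact hK.add_smul_sub_mem hy'.1.1 hy.1 ⟨ht0.le, ht1⟩
      · show fv f _ ≤ 0
        rw [fv_line, ht, div_mul_cancel₀ _ hpos.ne']; linarith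
    have h1 := hy'.2 _ hm
    rw [add_sub_cancel_left, inner_smul_right] at h1
    have h1' : ⟪x - y', y - y'⟫ ≤ 0 := by
      by_contra hh; push Not at hh
      have := mul_pos ht0 hh; linarith
    have h2 := hy.2 _ hy'.1.1
    have h3 : y = y' := by
      refine isProj_unique (K := {y, y'}) (x := x) ⟨by simp, ?_⟩ ⟨by simp, ?_⟩
      · rintro z (rfl | rfl)
        · simp
        · exact h2
      · rintro z (rfl | rfl)
        · exact h1'
        · simp
    rw [← h3] at hlt
    linarith
  refine ⟨key, ⟨hy'.1.1, key⟩, fun z hz => hy'.2 z ⟨hz.1, le_of_eq hz.2⟩⟩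

lemma fv_neg (f : E d × ℝ) (z : E d) : fv (-f) z = - fv f z := by
  simp [fv]; ring

lemma core_cut {k : ℕ} {x y : E d} {R K : Set (E d)} {D D' : E d → ℕ} {f : E d × ℝ}
    (hK : Convex ℝ K) (hKc : IsClosed K) (hRK : R ⊆ K)
    (hcut : (R ∩ {z | fv f z = 0}).Nonempty)
    (hpos : (R ∩ {z | 0 < fv f z}).Nonempty) (hneg : (R ∩ {z | fv f z < 0}).Nonempty)
    (hD : ∀ y, IsProj K x y → D' y = D y) (hy : IsProj K x y) (h0 : 0 ≤ fv f y) :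
    (Qp k x (R ∩ {z | 0 < fv f z}) (K ∩ {z | 0 ≤ fv f z}) D' ↔ Qp k x R K D) ∧
    (Qp k x (R ∩ {z | fv f z < 0}) (K ∩ {z | fv f z ≤ 0}) D' ↔
      Qp k x (R ∩ {z | fv f z = 0}) (K ∩ {z | fv f z = 0}) D') := by
  obtain ⟨h1, h2⟩ := proj_half (f := f) hK hy h0
  have hconv : Convex ℝ (K ∩ {z | fv f z ≤ 0}) := by
    refine hK.inter ?_
    have : {z : E d | fv f z ≤ 0} = {z | ⟪f.1, z⟫ ≤ f.2} := by ext z; simp [fv]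
    rw [this]
    exact convex_halfSpace_le (IsLinearMap.mk (fun a b => inner_add_right _ _ _)
      (fun a b => inner_smul_right _ _ _)) _
  obtain ⟨y', hy'⟩ := isProj_exists (K := K ∩ {z | fv f z ≤ 0})
    (hneg.mono fun z hz => ⟨hRK hz.1, le_of_lt (show fv f z < 0 from hz.2)⟩)
    (hKc.inter (isClosed_le (fv_cont _) continuous_const)) hconv x
  constructor
  · rw [Qp_of_proj hpos h1, Qp_of_proj (hpos.mono inter_subset_left) hy, hD y hy]
  · rw [Qp_of_proj hneg hy', Qp_of_proj hcut (h2 y' hy').2]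

lemma core_pos {k : ℕ} {x : E d} {R K : Set (E d)} {D D' : E d → ℕ} {f : E d × ℝ}
    (hR : R.Nonempty)
    (hRK' : ∀ z ∈ K, ∀ p ∈ R, ∀ t : ℝ, 0 < t → t ≤ 1 → z + t • (p - z) ∈ R)
    (hall : ∀ p ∈ R, 0 < fv f p)
    (hD : ∀ y, IsProj K x y → D' y = D y) :
    (Qp k x (R ∩ {z | 0 < fv f z}) (K ∩ {z | 0 ≤ fv f z}) D' ↔ Qp k x R K D) ∧
    ¬ Qp k x (R ∩ {z | fv f z < 0}) (K ∩ {z | fv f z ≤ 0}) D' := by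
  have e1 : R ∩ {z | 0 < fv f z} = R := inter_eq_left.2 hall
  have e2 : R ∩ {z | fv f z < 0} = ∅ := by
    ext z; simp only [mem_inter_iff, mem_ofPred_eq, mem_empty_iff_false, iff_false, not_and, not_lt]
    exact fun h => (hall z h).le
  have e3 : K ∩ {z | 0 ≤ fv f z} = K := by
    refine inter_eq_left.2 fun z hz => ?_
    obtain ⟨p, hp⟩ := hR
    show 0 ≤ fv f z
    by_contra hneg
    push Not at hneg
    have hpp := hall p hp
    have hd : 0 < fv f p - fv f z := by linarith
    have := hall _ (hRK' z hz p hp ((- fv f z) / (fv f p - fv f z)) (div_pos (by linarith) hd)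
      (by rw [div_le_one hd]; linarith))
    rw [fv_line, div_mul_cancel₀ _ hd.ne'] at this
    linarith
  refine ⟨Qp_congr e1 e3 fun y hy => hD y (by rwa [e3] at hy), Qp_empty e2⟩

lemma core {k : ℕ} {x : E d} {R K : Set (E d)} {D D' : E d → ℕ} {f : E d × ℝ}
    (hK : Convex ℝ K) (hKc : IsClosed K) (hRK : R ⊆ K) (hRc : Convex ℝ R)
    (hRK' : ∀ z ∈ K, ∀ p ∈ R, ∀ t : ℝ, 0 < t → t ≤ 1 → z + t • (p - z) ∈ R)
    (hcut : (R ∩ {z | fv f z = 0}).Nonempty →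
      (R ∩ {z | 0 < fv f z}).Nonempty ∧ (R ∩ {z | fv f z < 0}).Nonempty)
    (hD : ∀ y, IsProj K x y → D' y = D y) :
    (if Qp k x (R ∩ {z | fv f z < 0}) (K ∩ {z | fv f z ≤ 0}) D' then (1:ℤ) else 0) +
    (if Qp k x (R ∩ {z | 0 < fv f z}) (K ∩ {z | 0 ≤ fv f z}) D' then (1:ℤ) else 0) =
    (if Qp k x R K D then (1:ℤ) else 0) +
    (if Qp k x (R ∩ {z | fv f z = 0}) (K ∩ {z | fv f z = 0}) D' then (1:ℤ) else 0) := by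
  have n1 : {z : E d | fv (-f) z < 0} = {z | 0 < fv f z} := by ext z; simp [fv_neg]
  have n2 : {z : E d | fv (-f) z ≤ 0} = {z | 0 ≤ fv f z} := by ext z; simp [fv_neg]
  have n3 : {z : E d | 0 < fv (-f) z} = {z | fv f z < 0} := by ext z; simp [fv_neg]
  have n4 : {z : E d | 0 ≤ fv (-f) z} = {z | fv f z ≤ 0} := by ext z; simp [fv_neg]
  have n5 : {z : E d | fv (-f) z = 0} = {z | fv f z = 0} := by ext z; simp [fv_neg]
  rcases R.eq_empty_or_nonempty with hR | hR
  · subst hR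
    rw [if_neg (Qp_empty (by simp)), if_neg (Qp_empty (by simp)), if_neg (Qp_empty rfl),
      if_neg (Qp_empty (by simp))]
  by_cases hc : (R ∩ {z | fv f z = 0}).Nonempty
  · obtain ⟨hp, hn⟩ := hcut hc
    obtain ⟨y, hy⟩ := isProj_exists (hR.mono hRK) hKc hK x
    rcases le_total 0 (fv f y) with h0 | h0
    · obtain ⟨h1, h2⟩ := core_cut (k := k) hK hKc hRK hc hp hn hD hy h0
      simp only [h1, h2]; ring
    · obtain ⟨h1, h2⟩ := core_cut (k := k) (f := -f) hK hKc hRK (by rwa [n5]) (by rwa [n3])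
        (by rwa [n1]) hD hy (by rw [fv_neg]; linarith)
      rw [n1, n2, n5] at h2
      rw [n3, n4] at h1
      simp only [h1, h2]
  · rw [if_neg (show ¬ Qp k x (R ∩ {z | fv f z = 0}) (K ∩ {z | fv f z = 0}) D' from
      Qp_empty (not_nonempty_iff_eq_empty.1 hc))]
    have hsign : (∀ p ∈ R, 0 < fv f p) ∨ (∀ p ∈ R, fv f p < 0) := by
      by_contra hcon
      push Not at hcon
      obtain ⟨⟨p, hp, hp0⟩, q, hq, hq0⟩ := hcon
      have hp0 : fv f p < 0 := lt_of_le_of_ne hp0 fun h => hc ⟨p, hp, h⟩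
      have hd : 0 < fv f q - fv f p := by linarith
      refine hc ⟨p + ((- fv f p) / (fv f q - fv f p)) • (q - p), ?_, ?_⟩
      · exact hRc.add_smul_sub_mem hp hq ⟨(div_pos (by linarith) hd).le,
          by rw [div_le_one hd]; linarith⟩
      · show fv f _ = 0
        rw [fv_line, div_mul_cancel₀ _ hd.ne']; ring
    rcases hsign with hs | hs
    · obtain ⟨h1, h2⟩ := core_pos (k := k) hR hRK' hs hD
      simp only [h1, h2, if_false]; ring
    · obtain ⟨h1, h2⟩ := core_pos (k := k) (f := -f) hR hRK'
        (fun p hp => by rw [fv_neg]; linarith [hs p hp]) hD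
      rw [n1, n2] at h2
      rw [n3, n4] at h1
      simp only [h1, h2, if_false]

variable {ι : Type*}

lemma Clo_Reg_line {L : AffineSubspace ℝ (E d)} {φ : ι → E d × ℝ} {s T : Finset ι} {z p : E d}
    (hz : z ∈ Clo L φ s T) (hp : p ∈ Reg L φ s T) {t : ℝ} (ht : 0 < t) (ht1 : t ≤ 1) :
    z + t • (p - z) ∈ Reg L φ s T := by
  refine ⟨line_mem hz.1 hp.1 _, fun i hi => ?_⟩
  rw [fv_line]
  have h1 := hz.2 i hi
  have h2 := hp.2 i hi
  refine ⟨fun h => ?_, fun h => ?_⟩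
  · have := h1.1 h
    have := mul_pos ht (h2.1 h)
    nlinarith
  · have := h1.2 h
    have := mul_pos_of_neg_of_neg (neg_neg_of_pos ht) (h2.2 h)
    nlinarith

lemma Reg_convex (L : AffineSubspace ℝ (E d)) (φ : ι → E d × ℝ) (s T : Finset ι) :
    Convex ℝ (Reg L φ s T) := by
  rw [convex_iff_add_mem]
  intro y hy w hw a b ha hb hab
  rcases hb.eq_or_lt with rfl | hb
  · simpa [show a = 1 by linarith] using hy
  have e : a • y + b • w = y + b • (w - y) := by
    rw [show a = 1 - b by linarith]; module
  rw [e]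
  exact Clo_Reg_line (Reg_sub_Clo hy) hw hb (by linarith)

lemma Reg_insert_neg {L : AffineSubspace ℝ (E d)} {φ : ι → E d × ℝ} {s T : Finset ι} {a : ι}
    (ha : a ∉ T) : Reg L φ (insert a s) T = Reg L φ s T ∩ {z | fv (φ a) z < 0} := by
  ext z; simp [Reg, ha]; tauto

lemma Clo_insert_neg {L : AffineSubspace ℝ (E d)} {φ : ι → E d × ℝ} {s T : Finset ι} {a : ι}
    (ha : a ∉ T) : Clo L φ (insert a s) T = Clo L φ s T ∩ {z | fv (φ a) z ≤ 0} := by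
  ext z; simp [Clo, ha]; tauto

lemma mem_insert_of {s T : Finset ι} {a : ι} (ha : a ∉ s) {i : ι} (hi : i ∈ s) :
    i ∈ insert a T ↔ i ∈ T := by
  have : i ≠ a := fun h => ha (h ▸ hi)
  simp [this]

lemma Reg_insert_pos {L : AffineSubspace ℝ (E d)} {φ : ι → E d × ℝ} {s T : Finset ι} {a : ι}
    (ha : a ∉ s) : Reg L φ (insert a s) (insert a T) = Reg L φ s T ∩ {z | 0 < fv (φ a) z} := by
  have h : ∀ z, (∀ i ∈ s, (i ∈ insert a T → 0 < fv (φ i) z) ∧ (i ∉ insert a T → fv (φ i) z < 0)) ↔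
    (∀ i ∈ s, (i ∈ T → 0 < fv (φ i) z) ∧ (i ∉ T → fv (φ i) z < 0)) :=
    fun z => forall₂_congr fun i hi => by rw [mem_insert_of ha hi]
  ext z
  simp only [Reg, mem_inter_iff, mem_ofPred_eq, Finset.forall_mem_insert, h]
  simp; tauto

lemma Clo_insert_pos {L : AffineSubspace ℝ (E d)} {φ : ι → E d × ℝ} {s T : Finset ι} {a : ι}
    (ha : a ∉ s) : Clo L φ (insert a s) (insert a T) = Clo L φ s T ∩ {z | 0 ≤ fv (φ a) z} := by
  have h : ∀ z, (∀ i ∈ s, (i ∈ insert a T → 0 ≤ fv (φ i) z) ∧ (i ∉ insert a T → fv (φ i) z ≤ 0)) ↔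
    (∀ i ∈ s, (i ∈ T → 0 ≤ fv (φ i) z) ∧ (i ∉ T → fv (φ i) z ≤ 0)) :=
    fun z => forall₂_congr fun i hi => by rw [mem_insert_of ha hi]
  ext z
  simp only [Clo, mem_inter_iff, mem_ofPred_eq, Finset.forall_mem_insert, h]
  simp; tauto

lemma Reg_inf {L : AffineSubspace ℝ (E d)} {φ : ι → E d × ℝ} {s T : Finset ι} {a : ι} :
    Reg (L ⊓ Zs (φ a)) φ s T = Reg L φ s T ∩ {z | fv (φ a) z = 0} := by
  ext z; simp only [Reg, mem_inter_iff, mem_ofPred_eq, AffineSubspace.mem_inf_iff, mem_Zs]; tauto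

lemma Clo_inf {L : AffineSubspace ℝ (E d)} {φ : ι → E d × ℝ} {s T : Finset ι} {a : ι} :
    Clo (L ⊓ Zs (φ a)) φ s T = Clo L φ s T ∩ {z | fv (φ a) z = 0} := by
  ext z; simp only [Clo, mem_inter_iff, mem_ofPred_eq, AffineSubspace.mem_inf_iff, mem_Zs]; tauto

lemma Good_iff {k : ℕ} {x : E d} {L : AffineSubspace ℝ (E d)} {φ : ι → E d × ℝ} {s T : Finset ι} :
    Good k x L φ s T ↔ Qp k x (Reg L φ s T) (Clo L φ s T) (fun y => sdim (flatB L φ (zer φ s y))) :=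
  Iff.rfl

lemma Reg_move {L : AffineSubspace ℝ (E d)} {φ : ι → E d × ℝ} {s T : Finset ι} {y w : E d}
    (hy : y ∈ Reg L φ s T) (hw : w ∈ L) :
    ∃ t : ℝ, 0 < t ∧ y + t • (w - y) ∈ Reg L φ s T ∧ y + (-t) • (w - y) ∈ Reg L φ s T := by
  obtain ⟨t, ht, ht1, h⟩ := small s φ y w
  refine ⟨t, ht, ⟨line_mem hy.1 hw _, fun i hi => ?_⟩, ⟨line_mem hy.1 hw _, fun i hi => ?_⟩⟩
  all_goals
    have h2 := hy.2 i hi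
    refine ⟨fun hT => ?_, fun hT => ?_⟩
    · have h3 := h2.1 hT
      have h1 := h i hi h3.ne'
      first
      | exact (pos_of_mul_pos_right h1.1 h3.le)
      | exact (pos_of_mul_pos_right h1.2 h3.le)
    · have h3 := h2.2 hT
      have h1 := h i hi h3.ne
      first
      | exact (neg_of_mul_pos_right h1.1 h3.le)
      | exact (neg_of_mul_pos_right h1.2 h3.le)

lemma Good_step {k : ℕ} {x : E d} {L : AffineSubspace ℝ (E d)} {φ : ι → E d × ℝ} {s T : Finset ι}
    {a : ι} (ha : a ∉ s) (hT : T ⊆ s) (hne : ∃ w ∈ L, fv (φ a) w ≠ 0)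
    (hG : Gen L φ (insert a s) x) :
    (if Good k x L φ (insert a s) T then (1:ℤ) else 0) +
    (if Good k x L φ (insert a s) (insert a T) then (1:ℤ) else 0) =
    (if Good k x L φ s T then (1:ℤ) else 0) +
    (if Good k x (L ⊓ Zs (φ a)) φ s T then (1:ℤ) else 0) := by
  have haT : a ∉ T := fun h => ha (hT h)
  have hlast : Good k x (L ⊓ Zs (φ a)) φ s T ↔ Qp k x (Reg L φ s T ∩ {z | fv (φ a) z = 0})
      (Clo L φ s T ∩ {z | fv (φ a) z = 0})
      (fun y => sdim (flatB L φ (zer φ (insert a s) y))) := by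
    rw [Good_iff]
    refine Qp_congr Reg_inf Clo_inf fun y hy => ?_
    rw [Clo_inf] at hy
    have h0 : fv (φ a) y = 0 := hy.1.2
    show sdim _ = sdim _
    rw [flatB_inf]
    simp [zer, Finset.filter_insert, h0]
  rw [if_congr hlast rfl rfl]
  simp only [Good_iff, Reg_insert_neg haT, Clo_insert_neg haT, Reg_insert_pos ha, Clo_insert_pos ha]
  refine core (Clo_convex _ _ _ _) (Clo_closed _ _ _ _) Reg_sub_Clo (Reg_convex _ _ _ _)
    (fun z hz p hp t ht ht1 => Clo_Reg_line hz hp ht ht1) ?_ ?_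
  · rintro ⟨p, hp, hp0 : fv (φ a) p = 0⟩
    obtain ⟨w, hw, hw0⟩ := hne
    obtain ⟨t, ht, h1, h2⟩ := Reg_move hp hw
    have e1 := fv_line (φ a) p w t
    have e2 := fv_line (φ a) p w (-t)
    rw [hp0] at e1 e2
    rcases lt_or_gt_of_ne hw0 with hlt | hgt
    · have := mul_neg_of_pos_of_neg ht hlt
      exact ⟨⟨_, h2, by show 0 < fv _ _; rw [e2]; linarith⟩, ⟨_, h1, by show fv _ _ < 0; rw [e1]; linarith⟩⟩
    · have := mul_pos ht hgt
      exact ⟨⟨_, h1, by show 0 < fv _ _; rw [e1]; linarith⟩, ⟨_, h2, by show fv _ _ < 0; rw [e2]; linarith⟩⟩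
  · intro y hy
    show sdim _ = sdim _
    rw [flat_insert_eq hG hy]

lemma finrank_inf {L : AffineSubspace ℝ (E d)} {f : E d × ℝ} (hne : ∃ w ∈ L, fv f w ≠ 0)
    (h0 : ∃ w ∈ L, fv f w = 0) :
    Module.finrank ℝ L.direction = Module.finrank ℝ (L ⊓ Zs f).direction + 1 := by
  obtain ⟨w, hw, hw0⟩ := hne
  obtain ⟨p, hp, hp0⟩ := h0
  let ℓ : L.direction →ₗ[ℝ] ℝ := (innerₛₗ ℝ f.1).domRestrict L.direction
  have hsurj : LinearMap.range ℓ = ⊤ := by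
    rw [LinearMap.range_eq_top]
    apply LinearMap.surjective
    intro hz
    have : ℓ ⟨w - p, AffineSubspace.vsub_mem_direction hw hp⟩ = 0 := by rw [hz]; rfl
    have h2 : ⟪f.1, w - p⟫ = 0 := this
    rw [inner_sub_right] at h2
    simp only [fv] at hp0 hw0
    exact hw0 (by linarith)
  have hk : (L ⊓ Zs f).direction = (LinearMap.ker ℓ).map L.direction.subtype := by
    ext v
    have hpI : p ∈ L ⊓ Zs f := ⟨hp, hp0⟩
    rw [← AffineSubspace.vadd_mem_iff_mem_direction v hpI]
    rw [AffineSubspace.mem_inf_iff, AffineSubspace.vadd_mem_iff_mem_direction v hp]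
    simp only [mem_Zs, Submodule.mem_map, LinearMap.mem_ker, vadd_eq_add]
    have e : fv f (v + p) = ⟪f.1, v⟫ := by
      simp only [fv] at hp0 ⊢
      rw [inner_add_right]; linarith
    rw [e]
    constructor
    · rintro ⟨h1, h2⟩
      exact ⟨⟨v, h1⟩, h2, rfl⟩
    · rintro ⟨⟨u, hu⟩, h2, rfl⟩
      exact ⟨hu, h2⟩
  have h1 := LinearMap.finrank_range_add_finrank_ker ℓ
  rw [hsurj, finrank_top, Module.finrank_self] at h1
  rw [hk, LinearEquiv.finrank_eq (Submodule.equivMapOfInjective _ L.direction.injective_subtype _).symm]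
  omega

/-- Whitney sum. -/
def Wh (k : ℕ) (L : AffineSubspace ℝ (E d)) (φ : ι → E d × ℝ) (s : Finset ι) : ℤ :=
  ∑ B ∈ s.powerset, if (flatB L φ B).Nonempty ∧ sdim (flatB L φ B) = k then (-1 : ℤ) ^ B.card else 0

def Nc (k : ℕ) (x : E d) (L : AffineSubspace ℝ (E d)) (φ : ι → E d × ℝ) (s : Finset ι) : ℤ :=
  ∑ T ∈ s.powerset, if Good k x L φ s T then (1 : ℤ) else 0

lemma flatB_insert_of_zero {L : AffineSubspace ℝ (E d)} {φ : ι → E d × ℝ} {B : Finset ι} {a : ι}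
    (h : ∀ w ∈ L, fv (φ a) w = 0) : flatB L φ (insert a B) = flatB L φ B := by
  ext z; simp only [flatB, mem_ofPred_eq, Finset.forall_mem_insert]
  constructor
  · tauto
  · rintro ⟨h1, h2⟩; exact ⟨h1, h z h1, h2⟩

lemma Wh_insert {k : ℕ} {L : AffineSubspace ℝ (E d)} {φ : ι → E d × ℝ} {s : Finset ι} {a : ι}
    (ha : a ∉ s) : Wh k L φ (insert a s) = Wh k L φ s - Wh k (L ⊓ Zs (φ a)) φ s := by
  unfold Wh
  rw [Finset.sum_powerset_insert ha, sub_eq_add_neg, ← Finset.sum_neg_distrib]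
  congr 1
  refine Finset.sum_congr rfl fun B hB => ?_
  have haB : a ∉ B := fun h => ha (Finset.mem_powerset.1 hB h)
  rw [flatB_inf, Finset.card_insert_of_notMem haB]
  split_ifs <;> ring

theorem Nc_eq (k : ℕ) (x : E d) (φ : ι → E d × ℝ) (s : Finset ι) :
    ∀ L : AffineSubspace ℝ (E d), Gen L φ s x →
      Nc k x L φ s = (-1) ^ (Module.finrank ℝ L.direction + k) * Wh k L φ s := by
  induction s using Finset.induction_on with
  | empty =>
    intro L _
    have e1 : flatB L φ ∅ = L := by ext z; simp [flatB]
    have e2 : Reg L φ ∅ ∅ = L := by ext z; simp [Reg]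
    have e3 : Clo L φ ∅ ∅ = L := by ext z; simp [Clo]
    have e4 : ∀ y, zer φ ∅ y = ∅ := fun y => by simp [zer]
    have : Good k x L φ ∅ ∅ ↔ (L : Set (E d)).Nonempty ∧ sdim (L : Set (E d)) = k := by
      unfold Good
      simp only [e1, e2, e3, e4]
      constructor
      · rintro ⟨h, y, -, h2⟩; exact ⟨h, h2⟩
      · rintro ⟨h, h2⟩
        obtain ⟨y, hy⟩ := isProj_exists h L.closed_of_finiteDimensional L.convex x
        exact ⟨h, y, hy, h2⟩
    simp only [Nc, Wh, Finset.powerset_empty, Finset.sum_singleton, this, e1, Finset.card_empty,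
      pow_zero]
    split_ifs with h
    · rw [sdim_coe] at h
      rw [h.2, ← two_mul]; simp
    · simp
  | insert a s ha ih =>
    intro L hG
    by_cases hne : ∃ w ∈ L, fv (φ a) w ≠ 0
    · have hN : Nc k x L φ (insert a s) = Nc k x L φ s + Nc k x (L ⊓ Zs (φ a)) φ s := by
        unfold Nc
        rw [Finset.sum_powerset_insert ha, ← Finset.sum_add_distrib, ← Finset.sum_add_distrib]
        exact Finset.sum_congr rfl fun T hT => Good_step ha (Finset.mem_powerset.1 hT) hne hG
      rw [hN, Wh_insert ha, ih L (hG.mono (Finset.subset_insert _ _)), ih _ hG.restr]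
      by_cases h0 : ∃ w ∈ L, fv (φ a) w = 0
      · rw [finrank_inf hne h0]; ring
      · have : Wh k (L ⊓ Zs (φ a)) φ s = 0 := by
          refine Finset.sum_eq_zero fun B _ => if_neg ?_
          rintro ⟨⟨z, hz, -⟩, -⟩
          exact h0 ⟨z, hz.1, hz.2⟩
        rw [this]; ring
    · push Not at hne
      have e : L ⊓ Zs (φ a) = L := inf_eq_left.2 hne
      rw [Wh_insert ha, e, sub_self, mul_zero]
      refine Finset.sum_eq_zero fun T _ => if_neg ?_
      rintro ⟨⟨z, hz, h⟩, -⟩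
      have h1 := h a (Finset.mem_insert_self _ _)
      rw [hne z hz] at h1
      by_cases hT : a ∈ T
      · exact lt_irrefl _ (h1.1 hT)
      · exact lt_irrefl _ (h1.2 hT)

end induct2

section cells

lemma relint_move {F : Set (E d)} {f0 f : E d} (h : f0 ∈ intrinsicInterior ℝ F) (hf : f ∈ F) :
    ∃ t : ℝ, 0 < t ∧ f0 + (-t) • (f - f0) ∈ F := by
  rw [mem_intrinsicInterior] at h
  obtain ⟨y, hy, rfl⟩ := h
  have hfs : f ∈ affineSpan ℝ F := subset_affineSpan ℝ F hf
  let g : ℝ → affineSpan ℝ F := fun t => ⟨(y : E d) + (-t) • (f - y), line_mem y.2 hfs _⟩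
  have hg : Continuous g := Continuous.subtype_mk (by fun_prop) _
  have h0 : g 0 = y := by ext1; simp [g]
  have hev : ∀ᶠ t in nhds (0:ℝ), g t ∈ interior ((↑) ⁻¹' F : Set (affineSpan ℝ F)) :=
    hg.continuousAt.eventually (by rw [h0]; exact isOpen_interior.mem_nhds hy)
  obtain ⟨t, ht, ht0⟩ := ((hev.filter_mono nhdsWithin_le_nhds).and
    self_mem_nhdsWithin).exists (f := nhdsWithin (0:ℝ) (Ioi 0))
  have h2 : g t ∈ ((↑) ⁻¹' F : Set (affineSpan ℝ F)) := interior_subset ht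
  exact ⟨t, ht0, h2⟩

variable {ι : Type*}

def cell (φ : ι → E d × ℝ) (s : Finset ι) (p : E d) : Set (E d) :=
  {z | ∀ i ∈ s, 0 ≤ fv (φ i) p * fv (φ i) z ∧ (fv (φ i) p = 0 → fv (φ i) z = 0)}

def flat (φ : ι → E d × ℝ) (s : Finset ι) (p : E d) : Set (E d) :=
  {z | ∀ i ∈ s, fv (φ i) p = 0 → fv (φ i) z = 0}

variable {φ : ι → E d × ℝ} {s : Finset ι}

lemma cell_self (p : E d) : p ∈ cell φ s p := fun _ _ => ⟨mul_self_nonneg _, id⟩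

lemma cell_sub_flat {p : E d} : cell φ s p ⊆ flat φ s p := fun _ hz i hi => (hz i hi).2

lemma cell_trans {p q : E d} (h : q ∈ cell φ s p) : cell φ s q ⊆ cell φ s p := by
  intro z hz i hi
  obtain ⟨h1, h2⟩ := h i hi
  obtain ⟨h3, h4⟩ := hz i hi
  refine ⟨?_, fun h => h4 (h2 h)⟩
  by_cases hq : fv (φ i) q = 0
  · simp [h4 hq]
  · have hq2 : 0 < fv (φ i) q * fv (φ i) q := mul_self_pos.2 hq
    have := mul_nonneg h1 h3
    by_contra hcon
    push Not at hcon
    nlinarith [mul_neg_of_pos_of_neg hq2 hcon]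

lemma cell_eq {p q : E d} (h : q ∈ cell φ s p) (h' : p ∈ cell φ s q) : cell φ s p = cell φ s q :=
  (cell_trans h').antisymm (cell_trans h)

lemma flat_eq {p q : E d} (h : q ∈ cell φ s p) (h' : p ∈ cell φ s q) : flat φ s p = flat φ s q := by
  ext z
  exact ⟨fun hz i hi h0 => hz i hi ((h' i hi).2 h0), fun hz i hi h0 => hz i hi ((h i hi).2 h0)⟩

lemma cell_eq_inter {p q : E d} (h : q ∈ cell φ s p) : cell φ s q = cell φ s p ∩ flat φ s q := by
  refine (subset_inter (cell_trans h) cell_sub_flat).antisymm ?_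
  rintro z ⟨h1, h2⟩ i hi
  refine ⟨?_, h2 i hi⟩
  obtain ⟨h3, h4⟩ := h i hi
  obtain ⟨h5, h6⟩ := h1 i hi
  by_cases hp : fv (φ i) p = 0
  · simp [h4 hp]
  · have hq2 : 0 < fv (φ i) p * fv (φ i) p := mul_self_pos.2 hp
    have := mul_nonneg h3 h5
    by_contra hcon
    push Not at hcon
    nlinarith [mul_neg_of_pos_of_neg hq2 hcon]

lemma cell_move {q w : E d} (hw : w ∈ flat φ s q) :
    ∃ t : ℝ, 0 < t ∧ q + t • (w - q) ∈ cell φ s q ∧ q + (-t) • (w - q) ∈ cell φ s q := by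
  obtain ⟨t, ht, -, h⟩ := small s φ q w
  refine ⟨t, ht, fun i hi => ?_, fun i hi => ?_⟩
  all_goals
    by_cases h0 : fv (φ i) q = 0
    · simp only [fv_line, h0, hw i hi h0]; simp
    · refine ⟨?_, fun h => absurd h h0⟩
      first
      | exact (h i hi h0).1.le
      | exact (h i hi h0).2.le

lemma cell_perp {p q w x f : E d} (hq : q ∈ cell φ s p) (hw : w ∈ flat φ s q)
    (hx : ∀ g ∈ cell φ s p, ⟪x, g - f⟫ ≤ 0) (hfq : ⟪x, q - f⟫ = 0) : ⟪x, w - q⟫ = 0 := by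
  obtain ⟨t, ht, h1, h2⟩ := cell_move hw
  have h1 := hx _ (cell_trans hq h1)
  have h2 := hx _ (cell_trans hq h2)
  rw [add_sub_right_comm, inner_add_right, hfq, inner_smul_right] at h1 h2
  nlinarith

lemma affineSpan_cell (q : E d) : affineSpan ℝ (cell φ s q) = affineSpan ℝ (flat φ s q) := by
  refine le_antisymm (affineSpan_mono ℝ cell_sub_flat) (affineSpan_le.2 fun w hw => ?_)
  obtain ⟨t, ht, h1, -⟩ := cell_move hw
  have h2 := line_mem (subset_affineSpan ℝ _ (cell_self (φ := φ) (s := s) q))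
    (subset_affineSpan ℝ _ h1) t⁻¹
  rw [add_sub_cancel_left, smul_smul, inv_mul_cancel₀ ht.ne', one_smul, add_sub_cancel] at h2
  exact h2

lemma sdim_cell (q : E d) : sdim (cell φ s q) = sdim (flat φ s q) := by
  rw [sdim, sdim, affineSpan_cell]

lemma cell_eq_Inter (p : E d) : cell φ s p = ⋂ i ∈ s,
    ({z | 0 ≤ fv (φ i) p * fv (φ i) z} ∩ {z | fv (φ i) p = 0 → fv (φ i) z = 0}) := by
  ext z; simp [cell]

lemma cell_closed (p : E d) : IsClosed (cell φ s p) := by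
  rw [cell_eq_Inter]
  refine isClosed_biInter fun i _ => IsClosed.inter ?_ ?_
  · exact isClosed_le continuous_const (continuous_const.mul (fv_cont _))
  · by_cases h : fv (φ i) p = 0
    · simpa [h] using isClosed_eq (fv_cont _) continuous_const
    · simp [h]

lemma cell_line {p y w : E d} (hy : y ∈ cell φ s p) (hw : w ∈ cell φ s p) {t : ℝ} (ht : 0 ≤ t)
    (ht1 : t ≤ 1) : y + t • (w - y) ∈ cell φ s p := by
  intro i hi
  obtain ⟨h1, h2⟩ := hy i hi
  obtain ⟨h3, h4⟩ := hw i hi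
  rw [fv_line]
  refine ⟨?_, fun h => by simp [h2 h, h4 h]⟩
  have := mul_nonneg (sub_nonneg.2 ht1) h1
  have := mul_nonneg ht h3
  nlinarith

lemma cell_convex (p : E d) : Convex ℝ (cell φ s p) := by
  rw [convex_iff_add_mem]
  intro y hy w hw a b ha hb hab
  have e : a • y + b • w = y + b • (w - y) := by
    rw [show a = 1 - b by linarith]; module
  rw [e]
  exact cell_line hy hw hb (by linarith)

lemma face_convex {P F : Set (E d)} (hP : Convex ℝ P) (h : IsFaceOf P F) : Convex ℝ F := by
  rcases h with rfl | ⟨y, c, -, rfl⟩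
  · exact hP
  · exact hP.inter (convex_hyperplane (IsLinearMap.mk (fun a b => inner_add_right _ _ _)
      (fun a b => inner_smul_right _ _ _)) _)

lemma face_sub {P F : Set (E d)} (h : IsFaceOf P F) : F ⊆ P := by
  rcases h with rfl | ⟨y, c, -, rfl⟩
  · exact subset_rfl
  · exact fun z hz => hz.1

lemma face_eq_cell {p f0 : E d} {F : Set (E d)} (h : IsFaceOf (cell φ s p) F)
    (hf : f0 ∈ intrinsicInterior ℝ F) : F = cell φ s f0 := by
  have hf0F : f0 ∈ F := intrinsicInterior_subset hf
  have hf0 : f0 ∈ cell φ s p := face_sub h hf0F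
  apply Subset.antisymm
  · rw [cell_eq_inter hf0]
    refine fun z hz => ⟨face_sub h hz, fun i hi h0 => ?_⟩
    obtain ⟨t, ht, hm⟩ := relint_move hf hz
    obtain ⟨h1, h2⟩ := face_sub h hm i hi
    obtain ⟨h3, h4⟩ := face_sub h hz i hi
    by_cases hp : fv (φ i) p = 0
    · exact h4 hp
    · rw [fv_line, h0] at h1
      have h5 : fv (φ i) p * fv (φ i) z ≤ 0 := by
        by_contra hcon
        push Not at hcon
        have := mul_pos ht hcon
        nlinarith
      have h6 : fv (φ i) p * fv (φ i) z = 0 := le_antisymm h5 h3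
      exact (mul_eq_zero.1 h6).resolve_left hp
  · rcases h with rfl | ⟨y, c, hc, rfl⟩
    · exact cell_trans hf0
    · intro z hz
      refine ⟨cell_trans hf0 hz, ?_⟩
      have h0 : ⟪y, f0⟫ = c := hf0F.2
      have := cell_perp (x := y) (f := f0) hf0 (cell_sub_flat hz)
        (fun g hg => by rw [inner_sub_right, h0]; linarith [hc g hg]) (by simp)
      rw [inner_sub_right, h0] at this
      show ⟪y, z⟫ = c
      linarith

lemma face_exists_cell {p : E d} {F : Set (E d)} (h : IsFaceOf (cell φ s p) F)
    (hF : F.Nonempty) : ∃ q ∈ cell φ s p, F = cell φ s q := by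
  obtain ⟨f0, hf0⟩ := hF.intrinsicInterior (face_convex (cell_convex p) h)
  exact ⟨f0, face_sub h (intrinsicInterior_subset hf0), face_eq_cell h hf0⟩

lemma cell_face {p q : E d} (hq : q ∈ cell φ s p) : IsFaceOf (cell φ s p) (cell φ s q) := by
  right
  let Z := s.filter fun i => fv (φ i) q = 0
  have e : ∀ z, ⟪-∑ i ∈ Z, fv (φ i) p • (φ i).1, z⟫ =
      - (∑ i ∈ Z, fv (φ i) p * (φ i).2) - ∑ i ∈ Z, fv (φ i) p * fv (φ i) z := by
    intro z
    rw [inner_neg_left, sum_inner, ← neg_add', ← Finset.sum_add_distrib]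
    congr 1
    refine Finset.sum_congr rfl fun i _ => ?_
    simp only [real_inner_smul_left, fv]; ring
  refine ⟨-∑ i ∈ Z, fv (φ i) p • (φ i).1, - ∑ i ∈ Z, fv (φ i) p * (φ i).2, fun z hz => ?_, ?_⟩
  · rw [e]
    have : 0 ≤ ∑ i ∈ Z, fv (φ i) p * fv (φ i) z :=
      Finset.sum_nonneg fun i hi => (hz i (Finset.mem_filter.1 hi).1).1
    linarith
  · rw [cell_eq_inter hq]
    ext z
    simp only [mem_inter_iff, mem_ofPred_eq, e]
    refine and_congr_right fun hz => ?_
    rw [sub_eq_self, Finset.sum_eq_zero_iff_of_nonneg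
      fun i hi => (hz i (Finset.mem_filter.1 hi).1).1]
    constructor
    · intro h i hi
      obtain ⟨h1, h2⟩ := Finset.mem_filter.1 hi
      rw [h i h1 h2, mul_zero]
    · intro h i hi h0
      rcases mul_eq_zero.1 (h i (Finset.mem_filter.2 ⟨hi, h0⟩)) with h1 | h1
      · exact (hz i hi).2 h1
      · exact h1

lemma proj_of_mem_normal {p q x : E d} (hq : q ∈ cell φ s p)
    (hx : x ∈ cell φ s q + normalCone (cell φ s p) (cell φ s q)) :
    ∃ y ∈ cell φ s q, IsProj (cell φ s p) x y ∧ ∀ w ∈ flat φ s q, ⟪x - y, w - y⟫ = 0 := by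
  obtain ⟨f, hf, z, hz, rfl⟩ := Set.mem_add.1 hx
  have hqne : (cell φ s q).Nonempty := ⟨q, cell_self q⟩
  obtain ⟨f0, hf0⟩ := hqne.intrinsicInterior (cell_convex q)
  have hc : cell φ s q = cell φ s f0 := face_eq_cell (Or.inl rfl) hf0
  have hfm : f0 ∈ cell φ s q := intrinsicInterior_subset hf0
  have hfl : flat φ s q = flat φ s f0 := flat_eq hfm (hc ▸ cell_self q)
  have hg : ∀ g ∈ cell φ s p, ⟪z, g - f0⟫ ≤ 0 := fun g hg =>
    hz f0 hf0 (g - f0) ⟨1, one_pos, by simpa using hg⟩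
  have hperp : ∀ w ∈ flat φ s q, ⟪z, w - f0⟫ = 0 := fun w hw =>
    cell_perp (cell_trans hq hfm) (hfl ▸ hw) hg (by simp)
  have h0 := hperp f (cell_sub_flat hf)
  have e : ∀ g, ⟪z, g - f⟫ = ⟪z, g - f0⟫ := by
    intro g
    rw [show g - f = (g - f0) - (f - f0) by abel, inner_sub_right, h0, sub_zero]
  refine ⟨f, hf, ⟨cell_trans hq hf, fun g hg' => ?_⟩, fun w hw => ?_⟩
  · rw [add_sub_cancel_left, e]; exact hg g hg'
  · rw [add_sub_cancel_left, e]; exact hperp w hw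

lemma mem_normal_of_proj {p y x : E d} (hy : IsProj (cell φ s p) x y) :
    x ∈ cell φ s y + normalCone (cell φ s p) (cell φ s y) := by
  refine Set.mem_add.2 ⟨y, cell_self y, x - y, ?_, by abel⟩
  rintro f0 hf0 u ⟨δ, hδ, hu⟩
  have h1 := hy.2 _ hu
  have h2 := cell_perp hy.1 (cell_sub_flat (intrinsicInterior_subset hf0)) hy.2 (by simp)
  rw [add_sub_right_comm, inner_add_right, h2, inner_smul_right, zero_add] at h1
  by_contra hcon
  push Not at hcon
  have := mul_pos hδ hcon
  linarith

/-- Genericity in terms of flats. -/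
def GenF (φ : ι → E d × ℝ) (s : Finset ι) (x : E d) : Prop :=
  ∀ q, ∀ a ∈ s, ∀ y ∈ flat φ s q, (∀ w ∈ flat φ s q, ⟪x - y, w - y⟫ = 0) →
    fv (φ a) y = 0 → ∀ w ∈ flat φ s q, fv (φ a) w = 0

lemma face_normal_iff {k : ℕ} {x p : E d} (hG : GenF φ s x) {F : Set (E d)} :
    (F ∈ facesOfDim (cell φ s p) k ∧ x ∈ F + normalCone (cell φ s p) F) ↔
    ∃ y, IsProj (cell φ s p) x y ∧ F = cell φ s y ∧ sdim (flat φ s y) = k := by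
  constructor
  · rintro ⟨⟨h1, h2, h3⟩, h4⟩
    obtain ⟨q, hq, rfl⟩ := face_exists_cell h1 h2
    obtain ⟨y, hy, hp, hperp⟩ := proj_of_mem_normal hq h4
    have : q ∈ cell φ s y := by
      intro i hi
      refine ⟨by rw [mul_comm]; exact (hy i hi).1, fun h0 => ?_⟩
      exact hG q i hi y (cell_sub_flat hy) hperp h0 q fun _ _ h => h
    refine ⟨y, hp, cell_eq hy this, ?_⟩
    rw [← flat_eq hy this, ← sdim_cell, h3]
  · rintro ⟨y, hy, rfl, h⟩
    exact ⟨⟨cell_face hy.1, ⟨y, cell_self y⟩, by rw [sdim_cell, h]⟩, mem_normal_of_proj hy⟩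

lemma component_eq {p : E d} (hp : ∀ i ∈ s, fv (φ i) p ≠ 0) :
    connectedComponentIn {z | ∀ i ∈ s, fv (φ i) z ≠ 0} p =
      {z | ∀ i ∈ s, 0 < fv (φ i) p * fv (φ i) z} := by
  apply Subset.antisymm
  · intro z hz i hi
    by_contra hcon
    push Not at hcon
    have hpc : IsPreconnected (connectedComponentIn {z | ∀ i ∈ s, fv (φ i) z ≠ 0} p) :=
      isPreconnected_connectedComponentIn
    have hpp : p ∈ connectedComponentIn {z | ∀ i ∈ s, fv (φ i) z ≠ 0} p :=
      mem_connectedComponentIn hp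
    have := hpc.intermediate_value hz hpp
      (f := fun z => fv (φ i) p * fv (φ i) z) (continuous_const.mul (fv_cont _)).continuousOn
      (show (0:ℝ) ∈ _ from ⟨hcon, mul_self_nonneg _⟩)
    obtain ⟨w, hw, hw0⟩ := this
    have hw' := connectedComponentIn_subset _ _ hw i hi
    exact (mul_ne_zero (hp i hi) hw') hw0
  · refine IsPreconnected.subset_connectedComponentIn (Convex.isPreconnected ?_) ?_ ?_
    · rw [convex_iff_add_mem]
      intro y hy w hw a b ha hb hab i hi
      have e : a • y + b • w = y + b • (w - y) := by
        rw [show a = 1 - b by linarith]; module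
      have h1 := hy i hi
      have h2 := hw i hi
      rw [e, fv_line]
      have e2 : fv (φ i) p * (fv (φ i) y + b * (fv (φ i) w - fv (φ i) y)) =
          a * (fv (φ i) p * fv (φ i) y) + b * (fv (φ i) p * fv (φ i) w) := by
        rw [show a = 1 - b by linarith]; ring
      rw [e2]
      rcases ha.eq_or_lt with rfl | ha
      · rw [show b = 1 by linarith]; simpa using h2
      · have := mul_pos ha h1
        have := mul_nonneg hb h2.le
        linarith
    · exact fun i hi => mul_self_pos.2 (hp i hi)
    · exact fun z hz i hi h0 => by simpa [h0] using hz i hi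

lemma closure_open_cell {p : E d} (hp : ∀ i ∈ s, fv (φ i) p ≠ 0) :
    closure {z | ∀ i ∈ s, 0 < fv (φ i) p * fv (φ i) z} = cell φ s p := by
  apply Subset.antisymm
  · exact closure_minimal (fun z hz i hi => ⟨(hz i hi).le, fun h => absurd h (hp i hi)⟩)
      (cell_closed p)
  · intro z hz
    have hc : Continuous fun t : ℝ => z + t • (p - z) := by fun_prop
    have ht : Filter.Tendsto (fun t : ℝ => z + t • (p - z)) (nhdsWithin 0 (Ioi 0)) (nhds z) := by
      have := hc.tendsto 0
      simp only [zero_smul, add_zero] at this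
      exact this.mono_left nhdsWithin_le_nhds
    refine mem_closure_of_tendsto ht ?_
    have h3 : ∀ᶠ t : ℝ in nhdsWithin 0 (Ioi 0), t < 1 :=
      (eventually_lt_nhds (by norm_num)).filter_mono nhdsWithin_le_nhds
    filter_upwards [h3, self_mem_nhdsWithin] with t h1 (h0 : 0 < t) i hi
    rw [fv_line]
    have h4 := mul_pos h0 (mul_self_pos.2 (hp i hi))
    have h5 := mul_nonneg (sub_nonneg.2 h1.le) (hz i hi).1
    nlinarith

lemma exists_generic_vec (hs : ∀ i ∈ s, (φ i).1 ≠ 0) : ∃ u : E d, ∀ i ∈ s, ⟪(φ i).1, u⟫ ≠ 0 := by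
  obtain ⟨u, hu⟩ := Module.Dual.exists_forall_ne_zero_of_forall_exists (K := ℝ) (M := E d)
    (ι := s) (fun i => innerₛₗ ℝ (φ i).1) (fun i => ⟨(φ i).1, by simpa using hs i i.2⟩)
  exact ⟨u, fun i hi => hu ⟨i, hi⟩⟩

lemma exists_generic_cell (hs : ∀ i ∈ s, (φ i).1 ≠ 0) (q : E d) :
    ∃ p, (∀ i ∈ s, fv (φ i) p ≠ 0) ∧ q ∈ cell φ s p := by
  obtain ⟨u, hu⟩ := exists_generic_vec hs
  obtain ⟨t, ht, -, h⟩ := small s φ q (q + u)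
  have key : ∀ i ∈ s, fv (φ i) (q + t • (q + u - q)) ≠ 0 := by
    intro i hi
    by_cases h0 : fv (φ i) q = 0
    · have : fv (φ i) (q + u) = ⟪(φ i).1, u⟫ := by
        simp only [fv] at h0 ⊢
        rw [inner_add_right]; linarith
      rw [fv_line, h0, this]
      simpa using ⟨ht.ne', hu i hi⟩
    · intro h1
      have := (h i hi h0).1
      rw [h1, mul_zero] at this
      exact lt_irrefl _ this
  refine ⟨_, key, fun i hi => ⟨?_, fun h1 => absurd h1 (key i hi)⟩⟩
  by_cases h0 : fv (φ i) q = 0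
  · simp [h0]
  · rw [mul_comm]; exact (h i hi h0).1.le

end cells

section bridge

/-- `φ` is a system of equations for the hyperplanes in `A`. -/
def EqnRep (A : Finset (Set (E d))) (φ : Set (E d) → E d × ℝ) : Prop :=
  ∀ H ∈ A, (φ H).1 ≠ 0 ∧ ∀ z, z ∈ H ↔ fv (φ H) z = 0

variable {A : Finset (Set (E d))} {φ : Set (E d) → E d × ℝ}

lemma exists_rep (hA : ∀ H ∈ A, IsHyperplane H) : ∃ φ, EqnRep A φ := by
  choose! y c h using hA
  refine ⟨fun H => (y H, c H), fun H hH => ⟨(h H hH).1, fun z => ?_⟩⟩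
  have h2 := (h H hH).2
  constructor
  · intro hz
    rw [h2] at hz
    have hz : ⟪y H, z⟫ = c H := hz
    simp [fv, hz]
  · intro hz
    rw [h2]
    show ⟪y H, z⟫ = c H
    simp only [fv] at hz
    linarith

lemma chamber_iff (hφ : EqnRep A φ) {Q : Set (E d)} :
    IsChamber A Q ↔ ∃ p, (∀ H ∈ A, fv (φ H) p ≠ 0) ∧ Q = cell φ A p := by
  have e : (⋃ H ∈ A, H)ᶜ = {z | ∀ H ∈ A, fv (φ H) z ≠ 0} := by
    ext z
    simp only [mem_compl_iff, mem_iUnion, not_exists, mem_ofPred_eq]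
    exact forall₂_congr fun H hH => by rw [(hφ H hH).2 z]
  unfold IsChamber IsChamberOfUnion
  refine exists_congr fun p => ?_
  rw [← mem_compl_iff, e]
  refine and_congr_right fun (hp : ∀ H ∈ A, fv (φ H) p ≠ 0) => ?_
  rw [component_eq hp, closure_open_cell hp]

lemma faces_iff (hφ : EqnRep A φ) {P : Set (E d)} {j : ℕ} :
    (∃ Q, IsChamber A Q ∧ P ∈ facesOfDim Q j) ↔
      ∃ p, P = cell φ A p ∧ sdim (flat φ A p) = j := by
  constructor
  · rintro ⟨Q, hQ, h1, h2, h3⟩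
    obtain ⟨p, -, rfl⟩ := (chamber_iff hφ).1 hQ
    obtain ⟨q, -, rfl⟩ := face_exists_cell h1 h2
    exact ⟨q, rfl, by rw [← sdim_cell, h3]⟩
  · rintro ⟨q, rfl, h⟩
    obtain ⟨p, hp, hq⟩ := exists_generic_cell (φ := φ) (s := A) (fun H hH => (hφ H hH).1) q
    exact ⟨_, (chamber_iff hφ).2 ⟨p, hp, rfl⟩, cell_face hq, ⟨q, cell_self q⟩, by rw [sdim_cell, h]⟩

lemma mem_interSet {B : Finset (Set (E d))} {z : E d} : z ∈ interSet B ↔ ∀ H ∈ B, z ∈ H := by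
  simp [interSet]

lemma flat_eq_interSet (hφ : EqnRep A φ) (p : E d) :
    flat φ A p = interSet (A.filter fun H => p ∈ H) := by
  ext z
  rw [mem_interSet]
  constructor
  · intro h H hH
    obtain ⟨h1, h2⟩ := Finset.mem_filter.1 hH
    rw [(hφ H h1).2] at h2 ⊢
    exact h H h1 h2
  · intro h H hH h0
    rw [← (hφ H hH).2] at h0 ⊢
    exact h H (Finset.mem_filter.2 ⟨hH, h0⟩)

lemma interSet_affine (hφ : EqnRep A φ) {B : Finset (Set (E d))} (hB : B ⊆ A) :
    (affineSpan ℝ (interSet B) : Set (E d)) = interSet B := by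
  have : interSet B = ((⨅ H ∈ B, Zs (φ H) : AffineSubspace ℝ (E d)) : Set (E d)) := by
    ext z
    rw [mem_interSet]
    simp only [AffineSubspace.coe_iInf, mem_iInter]
    exact forall₂_congr fun H hH => (hφ H (hB hH)).2 z
  rw [this, AffineSubspace.affineSpan_coe]

/-- Genericity of `x`. -/
def GenA (A : Finset (Set (E d))) (x : E d) : Prop :=
  ∀ B ⊆ A, ∀ H ∈ A, ∀ y ∈ interSet B, (∀ w ∈ interSet B, ⟪x - y, w - y⟫ = 0) →
    y ∈ H → interSet B ⊆ H

def Bad (B : Finset (Set (E d))) (H : Set (E d)) : Set (E d) :=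
  {x | ∃ y ∈ interSet B, (∀ w ∈ interSet B, ⟪x - y, w - y⟫ = 0) ∧ y ∈ H ∧ ¬ interSet B ⊆ H}

lemma bad_sub (hφ : EqnRep A φ) {B : Finset (Set (E d))} (hB : B ⊆ A) {H : Set (E d)} (hH : H ∈ A) :
    Bad B H = ∅ ∨ ∃ K, IsHyperplane K ∧ Bad B H ⊆ K := by
  rcases (Bad B H).eq_empty_or_nonempty with h | ⟨x0, y0, hy0, -, hy0H, hn⟩
  · exact Or.inl h
  right
  have hM := interSet_affine hφ hB
  set M := affineSpan ℝ (interSet B) with hMdef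
  have hmem : ∀ z, z ∈ interSet B ↔ z ∈ M := fun z => by rw [← SetLike.mem_coe, hM]
  set D := M.direction
  let n := (φ H).1
  have hD : ∀ v ∈ D, ⟪n, v⟫ = ⟪D.starProjection n, v⟫ := by
    intro v hv
    have := D.starProjection_inner_eq_zero n v hv
    rw [inner_sub_left] at this
    linarith
  have hfv : ∀ z ∈ interSet B, fv (φ H) z = fv (φ H) y0 + ⟪D.starProjection n, z - y0⟫ := by
    intro z hz
    rw [← hD (z - y0) (AffineSubspace.vsub_mem_direction ((hmem z).1 hz) ((hmem y0).1 hy0))]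
    simp only [fv, inner_sub_right, n]; ring
  have h00 : fv (φ H) y0 = 0 := ((hφ H hH).2 y0).1 hy0H
  refine ⟨{x | ⟪D.starProjection n, x⟫ = ⟪D.starProjection n, y0⟫}, ⟨_, _, ?_, rfl⟩, ?_⟩
  · intro hu
    apply hn
    intro z hz
    rw [(hφ H hH).2, hfv z hz, h00, hu]; simp
  · rintro x ⟨y, hy, hperp, hyH, -⟩
    have h1 := hfv y hy
    rw [((hφ H hH).2 y).1 hyH, h00, zero_add, inner_sub_right] at h1
    have h2 : D.starProjection n + y ∈ interSet B := by
      rw [hmem]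
      exact AffineSubspace.vadd_mem_of_mem_direction (D.starProjection_apply_mem n) ((hmem y).1 hy)
    have h3 := hperp _ h2
    rw [add_sub_cancel_right, real_inner_comm, inner_sub_right] at h3
    show ⟪_, x⟫ = _
    linarith

lemma exists_hyps (hφ : EqnRep A φ) : ∃ (m : ℕ) (Hs : Fin m → Set (E d)),
    (∀ i, IsHyperplane (Hs i)) ∧ ∀ x : E d, x ∉ ⋃ i, Hs i → GenA A x := by
  have h : ∀ q : Finset (Set (E d)) × Set (E d), ∃ K : Set (E d), q.1 ⊆ A → q.2 ∈ A →
      Bad q.1 q.2 = ∅ ∨ (IsHyperplane K ∧ Bad q.1 q.2 ⊆ K) := by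
    intro q
    by_cases h1 : q.1 ⊆ A
    · by_cases h2 : q.2 ∈ A
      · rcases bad_sub hφ h1 h2 with h | ⟨K, hK⟩
        · exact ⟨∅, fun _ _ => Or.inl h⟩
        · exact ⟨K, fun _ _ => Or.inr hK⟩
      · exact ⟨∅, fun _ h => absurd h h2⟩
    · exact ⟨∅, fun h => absurd h h1⟩
  choose K hK using h
  let 𝓗 : Finset (Set (E d)) := ((A.powerset ×ˢ A).image K).filter IsHyperplane
  refine ⟨𝓗.card, fun i => (𝓗.equivFin.symm i : Set (E d)), fun i => ?_, fun x hx => ?_⟩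
  · exact (Finset.mem_filter.1 (𝓗.equivFin.symm i).2).2
  · intro B hB H hH y hy hperp hyH
    by_contra hn
    have hbad : x ∈ Bad B H := ⟨y, hy, hperp, hyH, hn⟩
    rcases hK (B, H) hB hH with h | ⟨h1, h2⟩
    · have h : Bad B H = ∅ := h
      rw [h] at hbad; exact hbad
    · apply hx
      have hm : K (B, H) ∈ 𝓗 := Finset.mem_filter.2 ⟨Finset.mem_image.2 ⟨(B, H),
        Finset.mem_product.2 ⟨Finset.mem_powerset.2 hB, hH⟩, rfl⟩, h1⟩
      refine mem_iUnion.2 ⟨𝓗.equivFin ⟨_, hm⟩, ?_⟩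
      simpa using h2 hbad

lemma GenA.genF {x : E d} (hφ : EqnRep A φ) (h : GenA A x) : GenF φ A x := by
  intro q H hH y hy hperp h0 w hw
  rw [flat_eq_interSet hφ] at hy hperp hw
  rw [← (hφ H hH).2] at h0 ⊢
  exact h _ (Finset.filter_subset _ _) H hH y hy hperp h0 hw

/-- A hyperplane of `A` inducing `K` on `L`. -/
def liftH (A : Finset (Set (E d))) (L K : Set (E d)) : Set (E d) :=
  if h : ∃ H ∈ A, H ∩ L = K then h.choose else ∅

lemma liftH_spec {L K : Set (E d)} (h : K ∈ restrict A L) : liftH A L K ∈ A ∧ liftH A L K ∩ L = K := by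
  have h1 : ∃ H ∈ A, H ∩ L = K := by
    simpa using (Finset.mem_filter.1 h).1
  rw [liftH, dif_pos h1]
  exact h1.choose_spec

lemma mem_restrict {L K : Set (E d)} : K ∈ restrict A L ↔ (∃ H ∈ A, H ∩ L = K) ∧ K.Nonempty ∧ K ≠ L := by
  simp [_root_.restrict]

def psi (A : Finset (Set (E d))) (φ : Set (E d) → E d × ℝ) (L K : Set (E d)) : E d × ℝ :=
  φ (liftH A L K)

lemma psi_spec (hφ : EqnRep A φ) {L K : Set (E d)} (h : K ∈ restrict A L) {z : E d} (hz : z ∈ L) :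
    fv (psi A φ L K) z = 0 ↔ z ∈ K := by
  obtain ⟨h1, h2⟩ := liftH_spec h
  rw [psi, ← (hφ _ h1).2]
  constructor
  · intro h; rw [← h2]; exact ⟨h, hz⟩
  · intro h; rw [← h2] at h; exact h.1

lemma flatB_psi (hφ : EqnRep A φ) {L : Set (E d)} (hL : (affineSpan ℝ L : Set (E d)) = L)
    {B : Finset (Set (E d))} (hB : B ⊆ restrict A L) :
    flatB (affineSpan ℝ L) (psi A φ L) B = interSet B ∩ L := by
  ext z
  have hm : z ∈ affineSpan ℝ L ↔ z ∈ L := by rw [← SetLike.mem_coe, hL]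
  simp only [flatB, mem_ofPred_eq, mem_inter_iff, mem_interSet, hm]
  rw [and_comm]
  refine and_congr_left fun hz => forall₂_congr fun K hK => psi_spec hφ (hB hK) hz

lemma gen_psi (hφ : EqnRep A φ) {x : E d} (hG : GenA A x) {B0 : Finset (Set (E d))} (hB0 : B0 ⊆ A) :
    Gen (affineSpan ℝ (interSet B0)) (psi A φ (interSet B0)) (restrict A (interSet B0)) x := by
  have hL := interSet_affine hφ hB0
  set L := interSet B0 with hLd
  intro B hB a ha
  rw [flatB_psi hφ hL hB]
  have e : interSet B ∩ L = interSet (B0 ∪ B.image (liftH A L)) := by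
    ext z
    simp only [mem_inter_iff, mem_interSet, Finset.mem_union, Finset.mem_image]
    constructor
    · rintro ⟨h1, h2⟩ H (hH | ⟨K, hK, rfl⟩)
      · exact mem_interSet.1 h2 H hH
      · have := h1 K hK
        rw [← (liftH_spec (hB hK)).2] at this
        exact this.1
    · intro h
      have hz : z ∈ L := mem_interSet.2 fun H hH => h H (Or.inl hH)
      refine ⟨fun K hK => ?_, hz⟩
      rw [← (liftH_spec (hB hK)).2]
      exact ⟨h _ (Or.inr ⟨K, hK, rfl⟩), hz⟩
  have hsub : interSet B ∩ L ⊆ L := inter_subset_right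
  have hlA := (liftH_spec ha).1
  intro y hy hperp h0 w hw
  have hsubA : B0 ∪ B.image (liftH A L) ⊆ A := by
    refine Finset.union_subset hB0 fun H hH => ?_
    obtain ⟨K, hK, rfl⟩ := Finset.mem_image.1 hH
    exact (liftH_spec (hB hK)).1
  rw [psi, ← (hφ _ hlA).2] at h0 ⊢
  rw [e] at hy hperp hw
  exact hG _ hsubA _ hlA y hy hperp h0 hw

lemma charCoeffIn_eq (hφ : EqnRep A φ) {x : E d} (hG : GenA A x) {j k : ℕ} (hk : k ≤ j)
    {L : Set (E d)} (hL : L ∈ levels A j) :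
    charCoeffIn L (restrict A L) j k =
      Nc k x (affineSpan ℝ L) (psi A φ L) (restrict A L) := by
  obtain ⟨h1, hne, hdim⟩ := Finset.mem_filter.1 hL
  obtain ⟨B0, hB0, rfl⟩ := Finset.mem_image.1 h1
  have hB0 := Finset.mem_powerset.1 hB0
  rw [Nc_eq _ _ _ _ _ (gen_psi hφ hG hB0)]
  have hdim : Module.finrank ℝ (affineSpan ℝ (interSet B0)).direction = j := hdim
  rw [hdim, charCoeffIn, Wh]
  congr 1
  · obtain ⟨m, rfl⟩ := Nat.exists_eq_add_of_le hk
    rw [Nat.add_sub_cancel_left, show k + m + k = m + 2 * k by ring, pow_add, pow_mul]; simp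
  · refine Finset.sum_congr rfl fun B hB => ?_
    rw [flatB_psi hφ (interSet_affine hφ hB0) (Finset.mem_powerset.1 hB)]

lemma flat_of_reg (hφ : EqnRep A φ) {B0 T : Finset (Set (E d))} (hB0 : B0 ⊆ A) {p : E d}
    (hp : p ∈ Reg (affineSpan ℝ (interSet B0)) (psi A φ (interSet B0)) (restrict A (interSet B0)) T) :
    flat φ A p = interSet B0 := by
  have hL := interSet_affine hφ hB0
  have hpL : p ∈ interSet B0 := by rw [← hL]; exact hp.1
  ext z
  constructor
  · intro hz
    refine mem_interSet.2 fun H hH => ?_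
    rw [(hφ H (hB0 hH)).2]
    exact hz H (hB0 hH) (((hφ H (hB0 hH)).2 p).1 (mem_interSet.1 hpL H hH))
  · intro hz H hH h0
    rw [← (hφ H hH).2] at h0 ⊢
    by_contra hzH
    have hR : H ∩ interSet B0 ∈ restrict A (interSet B0) :=
      mem_restrict.2 ⟨⟨H, hH, rfl⟩, ⟨p, h0, hpL⟩, fun h => hzH (h.ge hz).1⟩
    have h1 := hp.2 _ hR
    rw [(psi_spec hφ hR hpL).2 ⟨h0, hpL⟩] at h1
    by_cases hT : H ∩ interSet B0 ∈ T
    · exact lt_irrefl _ (h1.1 hT)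
    · exact lt_irrefl _ (h1.2 hT)

lemma clo_of_reg (hφ : EqnRep A φ) {B0 T : Finset (Set (E d))} (hB0 : B0 ⊆ A) {p : E d}
    (hp : p ∈ Reg (affineSpan ℝ (interSet B0)) (psi A φ (interSet B0)) (restrict A (interSet B0)) T) :
    Clo (affineSpan ℝ (interSet B0)) (psi A φ (interSet B0)) (restrict A (interSet B0)) T =
      cell φ A p := by
  have hfl := flat_of_reg hφ hB0 hp
  have hL := interSet_affine hφ hB0
  set L := interSet B0
  have hpL : p ∈ L := by rw [← hL]; exact hp.1
  ext z
  constructor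
  · intro hz H hH
    have hzL : z ∈ L := by rw [← hL]; exact hz.1
    have hz0 : fv (φ H) p = 0 → fv (φ H) z = 0 := by
      rw [← hfl] at hzL; exact hzL H hH
    refine ⟨?_, hz0⟩
    by_contra hcon
    push Not at hcon
    have hp0 : fv (φ H) p ≠ 0 := fun h => by simp [h] at hcon
    have hzn : fv (φ H) z ≠ 0 := fun h => by simp [h] at hcon
    have hdn : fv (φ H) p - fv (φ H) z ≠ 0 := by
      intro h
      rw [sub_eq_zero.1 h] at hcon
      nlinarith [mul_self_nonneg (fv (φ H) z)]
    set t := fv (φ H) p / (fv (φ H) p - fv (φ H) z) with ht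
    have hteq : t * (fv (φ H) p - fv (φ H) z) = fv (φ H) p := div_mul_cancel₀ _ hdn
    have hsq : 0 < fv (φ H) p * fv (φ H) p := mul_self_pos.2 hp0
    have ht0 : 0 < t := by
      have : t * (fv (φ H) p * fv (φ H) p - fv (φ H) p * fv (φ H) z) = fv (φ H) p * fv (φ H) p := by
        linear_combination fv (φ H) p * hteq
      by_contra hc
      push Not at hc
      nlinarith
    have ht1 : t < 1 := by
      have h2 : (1 - t) * (fv (φ H) p - fv (φ H) z) = - fv (φ H) z := by linear_combination -hteq
      have : (1 - t) * (fv (φ H) p * fv (φ H) p - fv (φ H) p * fv (φ H) z)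
          = - (fv (φ H) p * fv (φ H) z) := by
        linear_combination fv (φ H) p * h2
      by_contra hc
      push Not at hc
      nlinarith
    have hrL : p + t • (z - p) ∈ L := by
      rw [← hL]; exact line_mem hp.1 hz.1 t
    have hrH : p + t • (z - p) ∈ H := by
      rw [(hφ H hH).2, fv_line]; linear_combination -hteq
    have hR : H ∩ L ∈ restrict A L :=
      mem_restrict.2 ⟨⟨H, hH, rfl⟩, ⟨_, hrH, hrL⟩, fun h =>
        hp0 (((hφ H hH).2 p).1 (h.ge hpL).1)⟩
    have e0 := (psi_spec hφ hR hrL).2 ⟨hrH, hrL⟩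
    rw [fv_line] at e0
    have hzK : fv (psi A φ L (H ∩ L)) z ≠ 0 := fun h =>
      hzn (((hφ H hH).2 z).1 ((psi_spec hφ hR hzL).1 h).1)
    have h1 := hp.2 _ hR
    have h2 := hz.2 _ hR
    set P := fv (psi A φ L (H ∩ L)) p
    set Z := fv (psi A φ L (H ∩ L)) z
    have e1 : (1 - t) * P + t * Z = 0 := by linear_combination e0
    by_cases hT : H ∩ L ∈ T
    · have := mul_pos (sub_pos.2 ht1) (h1.1 hT)
      have := mul_nonneg ht0.le (h2.1 hT)
      linarith
    · have := mul_neg_of_pos_of_neg (sub_pos.2 ht1) (h1.2 hT)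
      have := mul_nonpos_of_nonneg_of_nonpos ht0.le (h2.2 hT)
      linarith
  · intro hz
    have hzL : z ∈ L := by rw [← hfl]; exact cell_sub_flat hz
    refine ⟨by rw [← SetLike.mem_coe, hL]; exact hzL, fun K hK => ?_⟩
    have h1 := hp.2 K hK
    have h2 := (hz _ (liftH_spec hK).1).1
    change 0 ≤ fv (psi A φ L K) p * fv (psi A φ L K) z at h2
    refine ⟨fun hT => ?_, fun hT => ?_⟩
    · exact nonneg_of_mul_nonneg_right h2 (h1.1 hT)
    · by_contra hc
      push Not at hc
      have := mul_neg_of_neg_of_pos (h1.2 hT) hc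
      linarith

lemma exists_reg (hφ : EqnRep A φ) {B0 : Finset (Set (E d))} (hB0 : B0 ⊆ A) {p : E d}
    (hp : flat φ A p = interSet B0) : ∃ T ⊆ restrict A (interSet B0),
    p ∈ Reg (affineSpan ℝ (interSet B0)) (psi A φ (interSet B0)) (restrict A (interSet B0)) T := by
  have hpL : p ∈ interSet B0 := by rw [← hp]; exact fun _ _ h => h
  refine ⟨(restrict A (interSet B0)).filter fun K => 0 < fv (psi A φ (interSet B0) K) p,
    Finset.filter_subset _ _, subset_affineSpan ℝ _ hpL, fun K hK => ⟨fun h =>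
      (Finset.mem_filter.1 h).2, fun h => ?_⟩⟩
  have h1 : fv (psi A φ (interSet B0) K) p ≤ 0 := by
    by_contra hc
    push Not at hc
    exact h (Finset.mem_filter.2 ⟨hK, hc⟩)
  refine lt_of_le_of_ne h1 fun h0 => ?_
  obtain ⟨hl1, hl2⟩ := liftH_spec hK
  apply (mem_restrict.1 hK).2.2
  rw [← hl2]
  refine inter_eq_right.2 fun z hz => ?_
  rw [← hp] at hz
  rw [(hφ _ hl1).2]
  exact hz _ hl1 h0

lemma flatB_zer (hφ : EqnRep A φ) {B0 : Finset (Set (E d))} (hB0 : B0 ⊆ A) {y : E d}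
    (hy : y ∈ interSet B0) :
    flatB (affineSpan ℝ (interSet B0)) (psi A φ (interSet B0))
      (zer (psi A φ (interSet B0)) (restrict A (interSet B0)) y) = flat φ A y := by
  have hsub : zer (psi A φ (interSet B0)) (_root_.restrict A (interSet B0)) y ⊆ _root_.restrict A (interSet B0) := Finset.filter_subset _ _
  rw [flatB_psi hφ (interSet_affine hφ hB0) hsub]
  ext z
  constructor
  · rintro ⟨h1, hz⟩ H hH h0
    rw [← (hφ H hH).2] at h0 ⊢
    by_contra hzH
    have hR : H ∩ interSet B0 ∈ restrict A (interSet B0) :=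
      mem_restrict.2 ⟨⟨H, hH, rfl⟩, ⟨y, h0, hy⟩, fun h => hzH (h.ge hz).1⟩
    exact hzH (mem_interSet.1 h1 _ (Finset.mem_filter.2 ⟨hR, (psi_spec hφ hR hy).2 ⟨h0, hy⟩⟩)).1
  · intro hz
    have hzL : z ∈ interSet B0 := by
      refine mem_interSet.2 fun H hH => ?_
      rw [(hφ H (hB0 hH)).2]
      exact hz H (hB0 hH) (((hφ H (hB0 hH)).2 y).1 (mem_interSet.1 hy H hH))
    refine ⟨mem_interSet.2 fun K hK => ?_, hzL⟩
    obtain ⟨h1, h2⟩ := Finset.mem_filter.1 hK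
    rw [← psi_spec hφ h1 hzL]
    exact hz _ (liftH_spec h1).1 h2

lemma interSet_empty_or (p : E d) (hφ : EqnRep A φ) {j : ℕ} (h : sdim (flat φ A p) = j) :
    flat φ A p ∈ levels A j := by
  refine Finset.mem_filter.2 ⟨Finset.mem_image.2 ⟨A.filter fun H => p ∈ H,
    Finset.mem_powerset.2 (Finset.filter_subset _ _), (flat_eq_interSet hφ p).symm⟩,
    ⟨p, fun _ _ h => h⟩, h⟩

end bridge


lemma main_count {A : Finset (Set (E d))} {φ : Set (E d) → E d × ℝ} (hφ : EqnRep A φ) {x : E d}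
    (hG : GenA A x) {j k : ℕ} (hk : k ≤ j) :
    (Set.ncard {q : Set (E d) × Set (E d) |
            (∃ Q, IsChamber A Q ∧ q.1 ∈ facesOfDim Q j) ∧
            q.2 ∈ facesOfDim q.1 k ∧ x ∈ q.2 + normalCone q.1 q.2} : ℤ)
          = levelCharCoeff A j k := by
  let C : Set (E d) → Finset (Set (E d)) → Set (E d) := fun L T =>
    Clo (affineSpan ℝ L) (psi A φ L) (restrict A L) T
  let G : Set (E d) → Finset (Set (E d)) → Prop := fun L T =>
    Good k x (affineSpan ℝ L) (psi A φ L) (restrict A L) T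
  let S : Finset (Σ _ : Set (E d), Finset (Set (E d))) :=
    (levels A j).sigma fun L => (restrict A L).powerset.filter (G L)
  let g : (Σ _ : Set (E d), Finset (Set (E d))) → Set (E d) × Set (E d) := fun σ =>
    (C σ.1 σ.2, cell φ A (Classical.epsilon (IsProj (C σ.1 σ.2) x)))
  have heps : ∀ L T y, IsProj (C L T) x y → Classical.epsilon (IsProj (C L T) x) = y :=
    fun L T y hy => isProj_unique (Classical.epsilon_spec ⟨y, hy⟩) hy
  have hset : {q : Set (E d) × Set (E d) |
            (∃ Q, IsChamber A Q ∧ q.1 ∈ facesOfDim Q j) ∧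
            q.2 ∈ facesOfDim q.1 k ∧ x ∈ q.2 + normalCone q.1 q.2} = ↑(S.image g) := by
    ext ⟨P, F⟩
    simp only [mem_ofPred_eq, Finset.coe_image, mem_image, Finset.mem_coe]
    rw [faces_iff hφ]
    constructor
    · rintro ⟨⟨p, rfl, hp⟩, hF⟩
      rw [face_normal_iff (hG.genF hφ)] at hF
      obtain ⟨y, hy, rfl, hyk⟩ := hF
      have hlev := interSet_empty_or p hφ hp
      obtain ⟨h1, hne, hdim⟩ := Finset.mem_filter.1 hlev
      obtain ⟨B0, hB0, hfl⟩ := Finset.mem_image.1 h1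
      have hB0 := Finset.mem_powerset.1 hB0
      obtain ⟨T, hT, hpT⟩ := exists_reg hφ hB0 hfl.symm
      have hclo := clo_of_reg hφ hB0 hpT
      have hyL : y ∈ interSet B0 := by
        have : y ∈ flat φ A p := cell_sub_flat hy.1
        rwa [← hfl] at this
      have hy' : IsProj (C (interSet B0) T) x y := by
        show IsProj (Clo _ _ _ _) x y
        rwa [hclo]
      refine ⟨⟨interSet B0, T⟩, Finset.mem_sigma.2 ⟨by rw [← hfl] at hlev; exact hlev,
        Finset.mem_filter.2 ⟨Finset.mem_powerset.2 hT, ⟨p, hpT⟩, y, hy', ?_⟩⟩, ?_⟩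
      · show sdim (flatB (affineSpan ℝ (interSet B0)) (psi A φ (interSet B0))
          (zer (psi A φ (interSet B0)) (restrict A (interSet B0)) y)) = k
        rw [flatB_zer hφ hB0 hyL, hyk]
      · exact Prod.ext hclo (by show cell φ A _ = _; rw [heps _ _ y hy'])
    · rintro ⟨⟨L, T⟩, hS, hg⟩
      obtain ⟨hL, hT⟩ := Finset.mem_sigma.1 hS
      obtain ⟨hT1, ⟨p, hp⟩, y, hy, hyk⟩ := Finset.mem_filter.1 hT
      obtain ⟨h1, hne, hdim⟩ := Finset.mem_filter.1 hL
      obtain ⟨B0, hB0, hfl⟩ := Finset.mem_image.1 h1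
      have hB0 := Finset.mem_powerset.1 hB0
      have hfl : interSet B0 = L := hfl
      subst hfl
      have hclo := clo_of_reg hφ hB0 hp
      have hfp := flat_of_reg hφ hB0 hp
      have hP : C (interSet B0) T = P := congrArg Prod.fst hg
      have hF : cell φ A (Classical.epsilon (IsProj (C (interSet B0) T) x)) = F :=
        congrArg Prod.snd hg
      have hPc : P = cell φ A p := hP.symm.trans hclo
      rw [heps _ _ y hy] at hF
      have hy' : IsProj (cell φ A p) x y := by
        rw [← hclo]; exact hy
      refine ⟨⟨p, hPc, by rw [hfp]; exact hdim⟩, ?_⟩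
      rw [hPc, face_normal_iff (hG.genF hφ)]
      refine ⟨y, hy', hF.symm, ?_⟩
      have hyL : y ∈ interSet B0 := by
        rw [← hfp]; exact cell_sub_flat hy'.1
      rw [← flatB_zer hφ hB0 hyL]
      exact hyk
  have hinj : Set.InjOn g ↑S := by
    rintro ⟨L, T⟩ hS ⟨L', T'⟩ hS' hgg
    obtain ⟨hL, hT⟩ := Finset.mem_sigma.1 hS
    obtain ⟨hT1, ⟨p, hp⟩, -⟩ := Finset.mem_filter.1 hT
    obtain ⟨h1, hne, hdim⟩ := Finset.mem_filter.1 hL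
    obtain ⟨B0, hB0, hfl⟩ := Finset.mem_image.1 h1
    have hB0 := Finset.mem_powerset.1 hB0
    have hfl : interSet B0 = L := hfl
    subst hfl
    obtain ⟨hL', hT'⟩ := Finset.mem_sigma.1 hS'
    obtain ⟨hT1', ⟨p', hp'⟩, -⟩ := Finset.mem_filter.1 hT'
    obtain ⟨h1', hne', hdim'⟩ := Finset.mem_filter.1 hL'
    obtain ⟨B0', hB0', hfl'⟩ := Finset.mem_image.1 h1'
    have hB0' := Finset.mem_powerset.1 hB0'
    have hfl' : interSet B0' = L' := hfl'
    subst hfl'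
    have hC : C (interSet B0) T = C (interSet B0') T' := congrArg Prod.fst hgg
    have hcc : cell φ A p = cell φ A p' :=
      ((clo_of_reg hφ hB0 hp).symm.trans hC).trans (clo_of_reg hφ hB0' hp')
    have hLL : interSet B0 = interSet B0' := by
      rw [← flat_of_reg hφ hB0 hp, ← flat_of_reg hφ hB0' hp']
      exact flat_eq (hcc ▸ cell_self p') (hcc ▸ cell_self p)
    rw [← hLL] at hC hp' hT1' ⊢
    have hpT' : p ∈ C (interSet B0) T' := hC ▸ Reg_sub_Clo hp
    have hTT : T = T' := by
      have hT1 := Finset.mem_powerset.1 hT1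
      have hT1' := Finset.mem_powerset.1 hT1'
      ext K
      constructor
      · intro hK
        by_contra hK'
        have h1 := (hp.2 K (hT1 hK)).1 hK
        have h2 := (hpT'.2 K (hT1 hK)).2 hK'
        linarith
      · intro hK'
        by_contra hK
        have h1 := (hp.2 K (hT1' hK')).2 hK
        have h2 := (hpT'.2 K (hT1' hK')).1 hK'
        linarith
    rw [hTT]
  rw [hset, Set.ncard_coe_finset, Finset.card_image_of_injOn hinj, Finset.card_sigma,
    levelCharCoeff, Nat.cast_sum]
  refine Finset.sum_congr rfl fun L hL => ?_
  rw [charCoeffIn_eq hφ hG hk hL, Nc, Finset.sum_boole]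


/-- `j`-th level main theorem: for generic `x`,
`Σ_{P ∈ R_j(A)} Σ_{F ∈ F_k(P)} 1_{F + N_F(P)}(x) = a_{kj}`. -/
theorem stmt19 {d : ℕ} (A : Finset (Set (E d)))
    (hA : ∀ H ∈ A, IsHyperplane H) (j k : ℕ) (hj : j ≤ d) (hk : k ≤ j) :
    ∃ (m : ℕ) (Hs : Fin m → Set (E d)), (∀ i, IsHyperplane (Hs i)) ∧
      ∀ x : E d, x ∉ ⋃ i, Hs i →
        (Set.ncard {q : Set (E d) × Set (E d) |
            (∃ Q, IsChamber A Q ∧ q.1 ∈ facesOfDim Q j) ∧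
            q.2 ∈ facesOfDim q.1 k ∧ x ∈ q.2 + normalCone q.1 q.2} : ℤ)
          = levelCharCoeff A j k := by
  obtain ⟨φ, hφ⟩ := exists_rep hA
  obtain ⟨m, Hs, h1, h2⟩ := exists_hyps hφ
  exact ⟨m, Hs, h1, fun x hx => main_count hφ (h2 x hx) hk⟩
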